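/- arXiv:1208.0161 — 3 statements merged into one kernel-verified Lean document; each statement's English description precedes it below -/
import Mathlib

section
/- For any function f : {±1}^n → ℝ, any exponents 1 ≤ p ≤ q with q > 1, and any 0 ≤ ε ≤ √((p−1)/(q−1)), the noise operator satisfies ‖T_ε f‖_q ≤ ‖f‖_p, where the norms are the normalized ℓ_p norms on the boolean cube. -/
noncomputable section

/-- The character `χ_S(x) = ∏_{i ∈ S} x_i` on the boolean cube, with `true ↦ -1`, `false ↦ 1`. -/
def cubeChar {n : ℕ} (S : Finset (Fin n)) (x : Fin n → Bool) : ℝ :=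
  ∏ i ∈ S, (if x i then -1 else 1)

/-- The Fourier coefficient `f̂(S)` of `f : {±1}ⁿ → ℝ`. -/
def cubeFourier {n : ℕ} (f : (Fin n → Bool) → ℝ) (S : Finset (Fin n)) : ℝ :=
  (2 ^ n : ℝ)⁻¹ * ∑ x : Fin n → Bool, f x * cubeChar S x

/-- The noise operator `T_ε f = ∑_S ε^{|S|} f̂(S) χ_S`. -/
def noiseOp {n : ℕ} (ε : ℝ) (f : (Fin n → Bool) → ℝ) : (Fin n → Bool) → ℝ :=
  fun x => ∑ S : Finset (Fin n), ε ^ S.card * cubeFourier f S * cubeChar S x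

/-- The normalised ℓ_p norm `‖f‖_p = (2^{-n} ∑_x |f(x)|^p)^{1/p}` on the boolean cube. -/
def cubeNorm {n : ℕ} (p : ℝ) (f : (Fin n → Bool) → ℝ) : ℝ :=
  ((2 ^ n : ℝ)⁻¹ * ∑ x : Fin n → Bool, |f x| ^ p) ^ (1 / p)


lemma hc_psi {r : ℝ} (hr : r ≤ 1) : 0 ≤ 1 - r + Real.log ((1 + r ^ 2) / 2) := by
  have hd : ∀ x : ℝ, HasDerivAt (fun r : ℝ => 1 - r + Real.log ((1 + r ^ 2) / 2))
      (-(1 - x) ^ 2 / (1 + x ^ 2)) x := by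
    intro x
    have hpos : 0 < 1 + x ^ 2 := by positivity
    have h1 : HasDerivAt (fun r : ℝ => (1 + r ^ 2) / 2) ((2 * x) / 2) x := by
      have := (((hasDerivAt_id x).pow 2).const_add 1).div_const 2
      simpa using this
    have h2 := ((hasDerivAt_id x).const_sub 1).add (h1.log (by positivity))
    refine h2.congr_deriv ?_
    field_simp
    ring
  have hanti : Antitone (fun r : ℝ => 1 - r + Real.log ((1 + r ^ 2) / 2)) := by
    apply antitone_of_deriv_nonpos
    · exact fun x => (hd x).differentiableAt
    · intro x
      rw [(hd x).deriv]
      have hpos : 0 < 1 + x ^ 2 := by positivity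
      rw [neg_div]
      have : 0 ≤ (1 - x) ^ 2 / (1 + x ^ 2) := by positivity
      linarith
  have := hanti hr
  norm_num at this
  linarith

lemma hc_logsob_aux {g h : ℝ} (hh : 0 < h) (hgh : h ≤ g) :
    2 * g ^ 2 * Real.log g + 2 * h ^ 2 * Real.log h
      - (g ^ 2 + h ^ 2) * Real.log ((g ^ 2 + h ^ 2) / 2) ≤ (g - h) ^ 2 := by
  set D : ℝ → ℝ := fun g => (g - h) ^ 2 - (2 * g ^ 2 * Real.log g + 2 * h ^ 2 * Real.log h
      - (g ^ 2 + h ^ 2) * Real.log ((g ^ 2 + h ^ 2) / 2)) with hD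
  have hd : ∀ x : ℝ, 0 < x → HasDerivAt D
      (2 * x * (1 - h / x + Real.log ((1 + (h / x) ^ 2) / 2))) x := by
    intro x hx
    have hpos : 0 < x ^ 2 + h ^ 2 := by positivity
    have h0 : HasDerivAt (fun r : ℝ => r ^ 2) (2 * x) x := by
      refine HasDerivAt.congr_deriv ((hasDerivAt_id x).pow 2) ?_
      simp
    have h1 : HasDerivAt (fun r : ℝ => (r ^ 2 + h ^ 2)) (2 * x) x := h0.add_const _
    have h2 : HasDerivAt (fun r : ℝ => (r ^ 2 + h ^ 2) / 2) (2 * x / 2) x := h1.div_const 2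
    have h3 := h1.mul (h2.log (by positivity))
    have h4 := (h0.const_mul 2).mul (Real.hasDerivAt_log hx.ne')
    have h5 : HasDerivAt (fun r : ℝ => (r - h) ^ 2) (2 * (x - h)) x := by
      refine HasDerivAt.congr_deriv (((hasDerivAt_id x).sub_const h).pow 2) ?_
      simp
    have h6 := h5.sub ((h4.add_const (2 * h ^ 2 * Real.log h)).sub h3)
    refine h6.congr_deriv ?_
    have e : (1 + (h / x) ^ 2) / 2 = ((x ^ 2 + h ^ 2) / 2) / x ^ 2 := by
      field_simp
    rw [e, Real.log_div (x := (x ^ 2 + h ^ 2) / 2) (y := x ^ 2) (by positivity) (by positivity),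
      Real.log_pow]
    field_simp
    push_cast
    ring
  have hmono : MonotoneOn D (Set.Ici h) := by
    apply monotoneOn_of_deriv_nonneg (convex_Ici h)
    · exact fun x hx => (hd x (hh.trans_le hx)).continuousAt.continuousWithinAt
    · intro x hx
      rw [interior_Ici] at hx
      exact (hd x (hh.trans hx)).differentiableAt.differentiableWithinAt
    · intro x hx
      rw [interior_Ici] at hx
      have hx0 := hh.trans hx
      rw [(hd x hx0).deriv]
      have := hc_psi (r := h / x) ((div_le_one hx0).2 (le_of_lt hx))
      positivity
  have h1 := hmono (Set.mem_Ici.2 le_rfl) (Set.mem_Ici.2 hgh) hgh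
  have h2 : D h = 0 := by
    simp only [hD]
    rw [show (h ^ 2 + h ^ 2) / 2 = h ^ 2 by ring, Real.log_pow]
    push_cast
    ring
  rw [h2] at h1
  simp only [hD] at h1
  linarith

lemma hc_logsob {g h : ℝ} (hg : 0 < g) (hh : 0 < h) :
    2 * g ^ 2 * Real.log g + 2 * h ^ 2 * Real.log h
      - (g ^ 2 + h ^ 2) * Real.log ((g ^ 2 + h ^ 2) / 2) ≤ (g - h) ^ 2 := by
  rcases le_total h g with H | H
  · exact hc_logsob_aux hh H
  · have := hc_logsob_aux hg H
    rw [add_comm (h ^ 2)] at this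
    linarith [this, (by ring : (g - h) ^ 2 = (h - g) ^ 2)]

lemma hc_sv_aux {A B s : ℝ} (hB : 0 < B) (hAB : B < A) (hs : 1 < s) :
    (A ^ (s / 2) - B ^ (s / 2)) ^ 2 ≤
      s ^ 2 / (4 * (s - 1)) * ((A ^ (s - 1) - B ^ (s - 1)) * (A - B)) := by
  set P := A ^ (s / 2) - B ^ (s / 2) with hP
  set lam := P / (s / 2) / (A - B) with hlam
  set F : ℝ → ℝ := fun t => t ^ (s - 1) / (s - 1) - 2 * lam * (t ^ (s / 2) / (s / 2))
    + lam ^ 2 * t with hF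
  have hs1 : 0 < s - 1 := by linarith
  have hd : ∀ x : ℝ, 0 < x → HasDerivAt F ((x ^ (s / 2 - 1) - lam) ^ 2) x := by
    intro x hx
    have h1 := (Real.hasDerivAt_rpow_const (x := x) (p := s - 1) (Or.inl hx.ne')).div_const (s - 1)
    have h2 := ((Real.hasDerivAt_rpow_const (x := x) (p := s / 2)
      (Or.inl hx.ne')).div_const (s / 2)).const_mul (2 * lam)
    have h3 := (h1.sub h2).add ((hasDerivAt_id x).const_mul (lam ^ 2))
    refine h3.congr_deriv ?_
    have e : x ^ (s - 1 - 1) = (x ^ (s / 2 - 1)) ^ 2 := by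
      rw [← Real.rpow_natCast, ← Real.rpow_mul hx.le]
      congr 1
      push_cast
      ring
    rw [e]
    have : s ≠ 0 := by linarith
    field_simp
    ring
  have hmono : MonotoneOn F (Set.Ici B) := by
    apply monotoneOn_of_deriv_nonneg (convex_Ici B)
    · exact fun x hx => (hd x (hB.trans_le hx)).continuousAt.continuousWithinAt
    · intro x hx
      rw [interior_Ici] at hx
      exact (hd x (hB.trans hx)).differentiableAt.differentiableWithinAt
    · intro x hx
      rw [interior_Ici] at hx
      rw [(hd x (hB.trans hx)).deriv]
      positivity
  have h1 := hmono (Set.mem_Ici.2 le_rfl) (Set.mem_Ici.2 hAB.le) hAB.le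
  simp only [hF] at h1
  have hAB' : 0 < A - B := by linarith
  have hs0 : 0 < s := by linarith
  have h2 : 0 ≤ (A ^ (s - 1) - B ^ (s - 1)) / (s - 1) - 2 * lam * (P / (s / 2))
      + lam ^ 2 * (A - B) := by
    rw [hP]
    have e : (A ^ (s - 1) - B ^ (s - 1)) / (s - 1)
      - 2 * lam * ((A ^ (s / 2) - B ^ (s / 2)) / (s / 2)) + lam ^ 2 * (A - B) =
      (A ^ (s - 1) / (s - 1) - 2 * lam * (A ^ (s / 2) / (s / 2)) + lam ^ 2 * A) -
      (B ^ (s - 1) / (s - 1) - 2 * lam * (B ^ (s / 2) / (s / 2)) + lam ^ 2 * B) := by ring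
    rw [e]; linarith
  set Q := A ^ (s - 1) - B ^ (s - 1) with hQ
  have h3 : 0 ≤ s ^ 2 / 4 * (A - B) * (Q / (s - 1) - 2 * lam * (P / (s / 2))
      + lam ^ 2 * (A - B)) := by positivity
  have h4 : s ^ 2 / 4 * (A - B) * (Q / (s - 1) - 2 * lam * (P / (s / 2))
      + lam ^ 2 * (A - B)) = s ^ 2 / (4 * (s - 1)) * (Q * (A - B)) - P ^ 2 := by
    rw [hlam]
    field_simp
    ring
  linarith

lemma hc_sv {A B s : ℝ} (hA : 0 < A) (hB : 0 < B) (hs : 1 < s) :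
    (A ^ (s / 2) - B ^ (s / 2)) ^ 2 ≤
      s ^ 2 / (4 * (s - 1)) * ((A ^ (s - 1) - B ^ (s - 1)) * (A - B)) := by
  rcases lt_trichotomy B A with H | H | H
  · exact hc_sv_aux hB H hs
  · simp [H]
  · have := hc_sv_aux hA H hs
    calc _ = (B ^ (s / 2) - A ^ (s / 2)) ^ 2 := by ring
      _ ≤ _ := this
      _ = _ := by ring

/-- The `L^s` two-point logarithmic Sobolev inequality. -/
lemma hc_ls {A B s : ℝ} (hA : 0 < A) (hB : 0 < B) (hs : 1 < s) :
    A ^ s * (s * Real.log A) + B ^ s * (s * Real.log B)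
      - (A ^ s + B ^ s) * Real.log ((A ^ s + B ^ s) / 2) ≤
      s ^ 2 / (4 * (s - 1)) * ((A ^ (s - 1) - B ^ (s - 1)) * (A - B)) := by
  refine le_trans ?_ (hc_sv hA hB hs)
  have h := hc_logsob (Real.rpow_pos_of_pos hA (s / 2)) (Real.rpow_pos_of_pos hB (s / 2))
  have e : ∀ x : ℝ, 0 < x → (x ^ (s / 2)) ^ 2 = x ^ s := by
    intro x hx
    rw [← Real.rpow_natCast, ← Real.rpow_mul hx.le]
    congr 1
    push_cast
    ring
  rw [e A hA, e B hB, Real.log_rpow hA, Real.log_rpow hB] at h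
  linarith

lemma hc_eps_deriv {p s : ℝ} (hp : 1 < p) (hs : 1 < s) :
    HasDerivAt (fun s : ℝ => Real.sqrt ((p - 1) / (s - 1)))
      (-Real.sqrt ((p - 1) / (s - 1)) / (2 * (s - 1))) s := by
  have hp1 : 0 < p - 1 := by linarith
  have hs1 : 0 < s - 1 := by linarith
  have h1 : HasDerivAt (fun s : ℝ => (p - 1) / (s - 1)) (-(p - 1) / (s - 1) ^ 2) s := by
    refine HasDerivAt.congr_deriv
      ((hasDerivAt_const s (p - 1)).div ((hasDerivAt_id s).sub_const 1) hs1.ne') ?_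
    simp
  have h2 := h1.sqrt (by positivity)
  refine h2.congr_deriv ?_
  have hw : Real.sqrt ((p - 1) / (s - 1)) ^ 2 = (p - 1) / (s - 1) := Real.sq_sqrt (by positivity)
  have hw0 : 0 < Real.sqrt ((p - 1) / (s - 1)) := by positivity
  rw [div_eq_div_iff (by positivity) (by positivity)]
  have : -(p - 1) / (s - 1) ^ 2 * (2 * (s - 1)) = - (2 * ((p - 1) / (s - 1))) := by
    field_simp
  rw [this]
  linear_combination 2 * hw

lemma hc_two_pos {u v p q : ℝ} (hu : 0 < u) (hv : 0 < v) (hp : 1 < p) (hpq : p ≤ q) :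
    (((u + v) / 2 + (u - v) / 2 * Real.sqrt ((p - 1) / (q - 1))) ^ q +
      ((u + v) / 2 - (u - v) / 2 * Real.sqrt ((p - 1) / (q - 1))) ^ q) / 2
      ≤ ((u ^ p + v ^ p) / 2) ^ (q / p) := by
  set a := (u + v) / 2 with ha
  set b := (u - v) / 2 with hb
  set E : ℝ → ℝ := fun s => Real.sqrt ((p - 1) / (s - 1)) with hE
  set M : ℝ → ℝ := fun s => ((a + b * E s) ^ s + (a - b * E s) ^ s) / 2 with hM
  have hp1 : 0 < p - 1 := by linarith
  have hE0 : ∀ s, 0 ≤ E s := fun s => Real.sqrt_nonneg _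
  have hE1 : ∀ s, p ≤ s → E s ≤ 1 := by
    intro s hs
    apply Real.sqrt_le_one.2
    rw [div_le_one (by linarith)]
    linarith
  have hApos : ∀ s, p ≤ s → 0 < a + b * E s := by
    intro s hs
    have h0 := hE0 s
    have h1 := hE1 s hs
    have : a + b * E s = (u * (1 + E s) + v * (1 - E s)) / 2 := by rw [ha, hb]; ring
    rw [this]
    have := mul_pos hu (by linarith : 0 < 1 + E s)
    have := mul_nonneg hv.le (by linarith : 0 ≤ 1 - E s)
    linarith
  have hBpos : ∀ s, p ≤ s → 0 < a - b * E s := by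
    intro s hs
    have h0 := hE0 s
    have h1 := hE1 s hs
    have : a - b * E s = (v * (1 + E s) + u * (1 - E s)) / 2 := by rw [ha, hb]; ring
    rw [this]
    have := mul_pos hv (by linarith : 0 < 1 + E s)
    have := mul_nonneg hu.le (by linarith : 0 ≤ 1 - E s)
    linarith
  have hMpos : ∀ s, p ≤ s → 0 < M s := by
    intro s hs
    have := Real.rpow_pos_of_pos (hApos s hs) s
    have := Real.rpow_pos_of_pos (hBpos s hs) s
    simp only [hM]
    positivity
  have hd : ∀ s, p ≤ s → ∃ d, d ≤ 0 ∧ HasDerivAt (fun s => Real.log (M s) / s) d s := by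
    intro s hs
    have hs1 : 1 < s := by linarith
    have hA := hApos s hs
    have hB := hBpos s hs
    have hMp := hMpos s hs
    have dE : HasDerivAt E (-E s / (2 * (s - 1))) s := hc_eps_deriv hp hs1
    have dA : HasDerivAt (fun s => a + b * E s) (b * (-E s / (2 * (s - 1)))) s :=
      (dE.const_mul b).const_add a
    have dB : HasDerivAt (fun s => a - b * E s) (-(b * (-E s / (2 * (s - 1))))) s :=
      (dE.const_mul b).const_sub a
    have dM := ((dA.rpow (hasDerivAt_id s) hA).add (dB.rpow (hasDerivAt_id s) hB)).div_const 2
    have dL := (HasDerivAt.log dM hMp.ne').div (hasDerivAt_id s) (by simp; linarith)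
    refine ⟨_, ?_, dL⟩
    have key := hc_ls hA hB hs1
    simp only [Pi.add_apply, id]
    set A := a + b * E s with hAd
    set B := a - b * E s with hBd
    have hbE : b * E s = (A - B) / 2 := by rw [hAd, hBd]; ring
    have hMs : M s = (A ^ s + B ^ s) / 2 := rfl
    have e1 : b * (-E s / (2 * (s - 1))) = -(A - B) / (4 * (s - 1)) := by
      rw [mul_div_assoc', mul_neg, hbE]
      have : s - 1 ≠ 0 := by linarith
      field_simp
      norm_num
    rw [e1]
    apply div_nonpos_of_nonpos_of_nonneg _ (by positivity)
    have hX := Real.rpow_pos_of_pos hA s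
    have hY := Real.rpow_pos_of_pos hB s
    set X := A ^ s
    set Y := B ^ s
    set L := Real.log ((X + Y) / 2)
    have hXY : 0 < X + Y := by linarith
    have e2 : ∀ N : ℝ, N / 2 / ((X + Y) / 2) * s - L * 1 = (N * s - (X + Y) * L) / (X + Y) := by
      intro N
      field_simp
    rw [e2]
    apply div_nonpos_of_nonpos_of_nonneg _ hXY.le
    have e3 : s ^ 2 / (4 * (s - 1)) * ((A ^ (s - 1) - B ^ (s - 1)) * (A - B)) =
      s * s * (A ^ (s - 1) - B ^ (s - 1)) * ((A - B) / (4 * (s - 1))) := by ring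
    rw [e3] at key
    rw [neg_div]
    linarith
  have hanti : AntitoneOn (fun s => Real.log (M s) / s) (Set.Ici p) := by
    apply antitoneOn_of_deriv_nonpos (convex_Ici p)
    · intro s hs
      obtain ⟨d, -, h⟩ := hd s hs
      exact h.continuousAt.continuousWithinAt
    · intro s hs
      rw [interior_Ici] at hs
      obtain ⟨d, -, h⟩ := hd s (le_of_lt hs)
      exact h.differentiableAt.differentiableWithinAt
    · intro s hs
      rw [interior_Ici] at hs
      obtain ⟨d, hd0, h⟩ := hd s (le_of_lt hs)
      rw [h.deriv]; exact hd0
  have h1 := hanti (Set.mem_Ici.2 le_rfl) (Set.mem_Ici.2 hpq) hpq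
  simp only at h1
  have hMp : M p = (u ^ p + v ^ p) / 2 := by
    have : E p = 1 := by simp only [hE]; rw [div_self hp1.ne', Real.sqrt_one]
    simp only [hM]
    rw [this, ha, hb]
    congr 3 <;> ring
  rw [← hMp]
  have h2 : Real.log (M q) ≤ Real.log (M p ^ (q / p)) := by
    rw [Real.log_rpow (hMpos p le_rfl)]
    have hq0 : 0 < q := by linarith
    rw [div_le_iff₀ hq0] at h1
    calc _ ≤ _ := h1
      _ = _ := by ring
  exact (Real.log_le_log_iff (hMpos q hpq) (Real.rpow_pos_of_pos (hMpos p le_rfl) _)).1 h2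

lemma hc_two_nonneg {u v p q : ℝ} (hu : 0 ≤ u) (hv : 0 ≤ v) (hp : 1 < p) (hpq : p ≤ q) :
    (((u + v) / 2 + (u - v) / 2 * Real.sqrt ((p - 1) / (q - 1))) ^ q +
      ((u + v) / 2 - (u - v) / 2 * Real.sqrt ((p - 1) / (q - 1))) ^ q) / 2
      ≤ ((u ^ p + v ^ p) / 2) ^ (q / p) := by
  set e := Real.sqrt ((p - 1) / (q - 1)) with he
  have hp0 : 0 ≤ p := by linarith
  have hq0 : 0 ≤ q := by linarith
  have hqp : 0 ≤ q / p := by positivity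
  have c1 : Continuous (fun d : ℝ => ((((u + d) + (v + d)) / 2 + ((u + d) - (v + d)) / 2 * e) ^ q +
      (((u + d) + (v + d)) / 2 - ((u + d) - (v + d)) / 2 * e) ^ q) / 2) := by
    refine Continuous.div_const (Continuous.add ?_ ?_) _
    · exact Continuous.rpow_const (by fun_prop) (fun _ => Or.inr hq0)
    · exact Continuous.rpow_const (by fun_prop) (fun _ => Or.inr hq0)
  have c2 : Continuous (fun d : ℝ => (((u + d) ^ p + (v + d) ^ p) / 2) ^ (q / p)) := by
    refine Continuous.rpow_const (Continuous.div_const (Continuous.add ?_ ?_) _)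
      (fun _ => Or.inr hqp)
    · exact Continuous.rpow_const (by fun_prop) (fun _ => Or.inr hp0)
    · exact Continuous.rpow_const (by fun_prop) (fun _ => Or.inr hp0)
  have t1 := (c1.tendsto 0).mono_left (nhdsWithin_le_nhds (s := Set.Ioi 0))
  have t2 := (c2.tendsto 0).mono_left (nhdsWithin_le_nhds (s := Set.Ioi 0))
  have := le_of_tendsto_of_tendsto t1 t2 (by
    filter_upwards [self_mem_nhdsWithin] with d hd
    have hd : 0 < d := hd
    exact hc_two_pos (by linarith) (by linarith) hp hpq)
  simpa using this

lemma hc_two {p q ε : ℝ} (u v : ℝ) (hp : 1 ≤ p) (hpq : p ≤ q) (hq : 1 < q) (hε0 : 0 ≤ ε)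
    (hε : ε ≤ Real.sqrt ((p - 1) / (q - 1))) :
    (|(1 + ε) / 2 * u + (1 - ε) / 2 * v| ^ q + |(1 - ε) / 2 * u + (1 + ε) / 2 * v| ^ q) / 2
      ≤ ((|u| ^ p + |v| ^ p) / 2) ^ (q / p) := by
  have hq1 : 0 < q - 1 := by linarith
  have hq0 : 0 < q := by linarith
  have hp0 : 0 < p := by linarith
  have hε2 : ε ^ 2 ≤ (p - 1) / (q - 1) := by
    have h := pow_le_pow_left₀ hε0 hε 2
    rwa [Real.sq_sqrt (div_nonneg (by linarith) hq1.le)] at h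
  have hε3 : ε ^ 2 * (q - 1) ≤ p - 1 := by rwa [le_div_iff₀ hq1] at hε2
  have hε1 : ε ≤ 1 := by
    refine hε.trans (Real.sqrt_le_one.2 ?_)
    rw [div_le_one hq1]; linarith
  set P := 1 + ε ^ 2 * (q - 1) with hP
  have hP1 : 1 ≤ P := by
    have : 0 ≤ ε ^ 2 * (q - 1) := by positivity
    linarith
  have hP0 : 0 < P := by linarith
  have hPp : P ≤ p := by linarith
  set x := |u| with hx
  set y := |v| with hy
  have hx0 : 0 ≤ x := abs_nonneg _
  have hy0 : 0 ≤ y := abs_nonneg _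
  have habs : ∀ c d : ℝ, 0 ≤ c → 0 ≤ d → |c * u + d * v| ^ q ≤ (c * x + d * y) ^ q := by
    intro c d hc hd
    apply Real.rpow_le_rpow (abs_nonneg _) _ hq0.le
    calc |c * u + d * v| ≤ |c * u| + |d * v| := abs_add_le _ _
      _ = c * x + d * y := by rw [abs_mul, abs_mul, abs_of_nonneg hc, abs_of_nonneg hd]
  have h1 := habs ((1 + ε) / 2) ((1 - ε) / 2) (by linarith) (by linarith)
  have h2 := habs ((1 - ε) / 2) ((1 + ε) / 2) (by linarith) (by linarith)
  have main : (((1 + ε) / 2 * x + (1 - ε) / 2 * y) ^ q +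
      ((1 - ε) / 2 * x + (1 + ε) / 2 * y) ^ q) / 2 ≤ ((x ^ P + y ^ P) / 2) ^ (q / P) := by
    rcases hε0.eq_or_lt with h0 | h0
    · have hP' : P = 1 := by rw [hP, ← h0]; ring
      rw [hP', ← h0]
      simp only [Real.rpow_one, div_one]
      apply le_of_eq
      rw [show (1 + 0) / 2 * x + (1 - 0) / 2 * y = (x + y) / 2 by ring,
        show (1 - 0) / 2 * x + (1 + 0) / 2 * y = (x + y) / 2 by ring]
      ring
    · have hP' : 1 < P := by
        have : 0 < ε ^ 2 * (q - 1) := by positivity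
        linarith
      have h := hc_two_nonneg hx0 hy0 hP' (hPp.trans hpq)
      have e1 : Real.sqrt ((P - 1) / (q - 1)) = ε := by
        rw [hP, add_sub_cancel_left, mul_div_assoc, div_self hq1.ne', mul_one, Real.sqrt_sq hε0]
      rw [e1] at h
      rw [show (1 + ε) / 2 * x + (1 - ε) / 2 * y = (x + y) / 2 + (x - y) / 2 * ε by ring,
        show (1 - ε) / 2 * x + (1 + ε) / 2 * y = (x + y) / 2 - (x - y) / 2 * ε by ring]
      exact h
  have hX0 : 0 ≤ x ^ P := Real.rpow_nonneg hx0 _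
  have hY0 : 0 ≤ y ^ P := Real.rpow_nonneg hy0 _
  have pm : ((x ^ P + y ^ P) / 2) ^ (p / P) ≤ (x ^ p + y ^ p) / 2 := by
    have h := (convexOn_rpow (p := p / P) ((one_le_div hP0).2 hPp)).2
      (Set.mem_Ici.2 hX0) (Set.mem_Ici.2 hY0)
      (by norm_num : (0 : ℝ) ≤ 1 / 2) (by norm_num : (0 : ℝ) ≤ 1 / 2) (by norm_num)
    simp only [smul_eq_mul] at h
    rw [← Real.rpow_mul hx0, ← Real.rpow_mul hy0, mul_div_cancel₀ _ hP0.ne'] at h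
    rw [show (x ^ P + y ^ P) / 2 = 1 / 2 * x ^ P + 1 / 2 * y ^ P by ring]
    linarith
  have fin : ((x ^ P + y ^ P) / 2) ^ (q / P) ≤ ((x ^ p + y ^ p) / 2) ^ (q / p) := by
    have h := Real.rpow_le_rpow (by positivity) pm (by positivity : 0 ≤ q / p)
    rw [← Real.rpow_mul (by positivity)] at h
    rwa [show p / P * (q / p) = q / P by field_simp] at h
  linarith

/-- One-coordinate noise kernel. -/
def hcK (ε : ℝ) (b c : Bool) : ℝ :=
  (1 + ε * (if b then -1 else 1) * (if c then -1 else 1)) / 2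

lemma noiseOp_eq {n : ℕ} (ε : ℝ) (f : (Fin n → Bool) → ℝ) (x : Fin n → Bool) :
    noiseOp ε f x = ∑ y, (∏ i, hcK ε (x i) (y i)) * f y := by
  unfold noiseOp cubeFourier cubeChar
  have hk : ∀ y : Fin n → Bool, ∏ i, hcK ε (x i) (y i) = (2 ^ n : ℝ)⁻¹ *
      ∑ S : Finset (Fin n), ε ^ S.card * (∏ i ∈ S, (if y i then -1 else 1)) *
        ∏ i ∈ S, (if x i then -1 else 1) := by
    intro y
    unfold hcK
    rw [Finset.prod_div_distrib, Finset.prod_one_add, Finset.powerset_univ]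
    simp only [Finset.prod_const, Finset.card_univ, Fintype.card_fin, Finset.prod_mul_distrib]
    rw [div_eq_inv_mul]
    congr 1
    exact Finset.sum_congr rfl fun S _ => by ring
  simp only [hk, Finset.mul_sum, Finset.sum_mul]
  rw [Finset.sum_comm]
  refine Finset.sum_congr rfl fun y _ => Finset.sum_congr rfl fun S _ => ?_
  ring

lemma hc_sum_cons {n : ℕ} (g : (Fin (n + 1) → Bool) → ℝ) :
    ∑ x, g x = ∑ y : Fin n → Bool, (g (Fin.cons false y) + g (Fin.cons true y)) := by
  rw [← (Fin.consEquiv (fun _ => Bool)).sum_comp, Fintype.sum_prod_type_right]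
  refine Finset.sum_congr rfl fun y _ => ?_
  rw [Fintype.sum_bool, add_comm]
  rfl

lemma noiseOp_cons {n : ℕ} (ε : ℝ) (f : (Fin (n + 1) → Bool) → ℝ) (b : Bool) (x : Fin n → Bool) :
    noiseOp ε f (Fin.cons b x) =
      hcK ε b false * noiseOp ε (fun y => f (Fin.cons false y)) x +
      hcK ε b true * noiseOp ε (fun y => f (Fin.cons true y)) x := by
  simp only [noiseOp_eq]
  rw [hc_sum_cons, Finset.mul_sum, Finset.mul_sum, ← Finset.sum_add_distrib]
  refine Finset.sum_congr rfl fun y _ => ?_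
  simp only [Fin.prod_univ_succ, Fin.cons_zero, Fin.cons_succ]
  ring

lemma hc_main {p q ε : ℝ} (hp : 1 ≤ p) (hpq : p ≤ q) (hq : 1 < q) (hε0 : 0 ≤ ε)
    (hε : ε ≤ Real.sqrt ((p - 1) / (q - 1))) : ∀ (n : ℕ) (f : (Fin n → Bool) → ℝ),
    (2 ^ n : ℝ)⁻¹ * ∑ x, |noiseOp ε f x| ^ q ≤ ((2 ^ n : ℝ)⁻¹ * ∑ x, |f x| ^ p) ^ (q / p) := by
  have hp0 : 0 < p := by linarith
  have hq0 : 0 < q := by linarith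
  have hr1 : 1 ≤ q / p := (one_le_div hp0).2 hpq
  have hr0 : 0 < q / p := by positivity
  intro n
  induction n with
  | zero =>
    intro f
    simp only [noiseOp_eq]
    simp only [pow_zero, inv_one, one_mul, Finset.univ_unique, Finset.sum_singleton,
      Finset.univ_eq_empty, Finset.prod_empty]
    rw [← Real.rpow_mul (abs_nonneg _), mul_div_cancel₀ _ hp0.ne']
  | succ n ih =>
    intro f
    set r := q / p with hr
    set c : ℝ := (2 ^ n : ℝ)⁻¹ with hc
    have hc0 : 0 < c := by positivity
    have hc' : (2 ^ (n + 1) : ℝ)⁻¹ = c / 2 := by rw [hc, pow_succ]; field_simp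
    set g0 := noiseOp ε (fun y => f (Fin.cons false y)) with hg0
    set g1 := noiseOp ε (fun y => f (Fin.cons true y)) with hg1
    set F0 := c * ∑ y, |f (Fin.cons false y)| ^ p with hF0
    set F1 := c * ∑ y, |f (Fin.cons true y)| ^ p with hF1
    have i0 : c * ∑ x, |g0 x| ^ q ≤ F0 ^ r := ih _
    have i1 : c * ∑ x, |g1 x| ^ q ≤ F1 ^ r := ih _
    have nn : ∀ (g : (Fin n → Bool) → ℝ) (s : ℝ), 0 ≤ ∑ x, |g x| ^ s := fun g s =>
      Finset.sum_nonneg fun x _ => Real.rpow_nonneg (abs_nonneg _) _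
    have hF0n : 0 ≤ F0 := mul_nonneg hc0.le (nn (fun y => f (Fin.cons false y)) p)
    have hF1n : 0 ≤ F1 := mul_nonneg hc0.le (nn (fun y => f (Fin.cons true y)) p)
    have rhs : (2 ^ (n + 1) : ℝ)⁻¹ * ∑ x, |f x| ^ p = (F0 + F1) / 2 := by
      rw [hc', hc_sum_cons, Finset.sum_add_distrib, hF0, hF1]
      ring
    rw [rhs, hc', hc_sum_cons]
    have gp : ∀ t : ℝ, (|t| ^ p) ^ r = |t| ^ q := by
      intro t
      rw [← Real.rpow_mul (abs_nonneg _), hr, mul_div_cancel₀ _ hp0.ne']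
    have step1 : c / 2 * ∑ y, (|noiseOp ε f (Fin.cons false y)| ^ q
        + |noiseOp ε f (Fin.cons true y)| ^ q) ≤
        c * ∑ y, ((|g0 y| ^ p + |g1 y| ^ p) / 2) ^ r := by
      rw [div_mul_eq_mul_div, mul_div_assoc, Finset.sum_div]
      refine mul_le_mul_of_nonneg_left (Finset.sum_le_sum fun y _ => ?_) hc0.le
      have h := hc_two (g0 y) (g1 y) hp hpq hq hε0 hε
      rw [noiseOp_cons, noiseOp_cons]
      refine le_of_eq_of_le ?_ h
      simp only [hcK, hg0, hg1]
      norm_num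
      ring_nf
    refine step1.trans ?_
    have mink := Real.Lp_add_le_of_nonneg (s := Finset.univ) (f := fun y => |g0 y| ^ p)
      (g := fun y => |g1 y| ^ p) hr1 (fun y _ => Real.rpow_nonneg (abs_nonneg _) _)
      (fun y _ => Real.rpow_nonneg (abs_nonneg _) _)
    simp only [gp] at mink
    have hpn : ∀ y, 0 ≤ |g0 y| ^ p + |g1 y| ^ p := fun y =>
      add_nonneg (Real.rpow_nonneg (abs_nonneg _) _) (Real.rpow_nonneg (abs_nonneg _) _)
    set S := ∑ y, (|g0 y| ^ p + |g1 y| ^ p) ^ r with hS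
    have hSn : 0 ≤ S := Finset.sum_nonneg fun y _ => Real.rpow_nonneg (hpn y) _
    have e1 : c * ∑ y, ((|g0 y| ^ p + |g1 y| ^ p) / 2) ^ r = c * S / 2 ^ r := by
      rw [mul_div_assoc, hS, Finset.sum_div]
      congr 1
      exact Finset.sum_congr rfl fun y _ => Real.div_rpow (hpn y) (by norm_num) _
    rw [e1, Real.div_rpow (by positivity) (by norm_num)]
    refine div_le_div_of_nonneg_right ?_ (by positivity)
    have root : ∀ (T F : ℝ), 0 ≤ T → 0 ≤ F → c * T ≤ F ^ r → c ^ (1 / r) * T ^ (1 / r) ≤ F := by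
      intro T F hT hF h
      have h' := Real.rpow_le_rpow (by positivity) h (by positivity : 0 ≤ 1 / r)
      rwa [Real.mul_rpow hc0.le hT, ← Real.rpow_mul hF, mul_one_div_cancel hr0.ne',
        Real.rpow_one] at h'
    have j0 := root _ _ (nn g0 q) hF0n i0
    have j1 := root _ _ (nn g1 q) hF1n i1
    have hcr : 0 ≤ c ^ (1 / r) := Real.rpow_nonneg hc0.le _
    have k : (c * S) ^ (1 / r) ≤ F0 + F1 := by
      rw [Real.mul_rpow hc0.le hSn]
      calc _ ≤ _ := mul_le_mul_of_nonneg_left mink hcr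
        _ ≤ _ := by rw [mul_add]; linarith
    have k' := Real.rpow_le_rpow (Real.rpow_nonneg (by positivity) _) k hr0.le
    rwa [← Real.rpow_mul (by positivity), one_div_mul_cancel hr0.ne', Real.rpow_one] at k'

/-- Hypercontractivity of the noise operator on the boolean cube (Bonami, Gross):
if `1 ≤ p ≤ q`, `q > 1` and `0 ≤ ε ≤ √((p-1)/(q-1))`, then `‖T_ε f‖_q ≤ ‖f‖_p`. -/
theorem noiseOp_hypercontractive {n : ℕ} (f : (Fin n → Bool) → ℝ) (p q ε : ℝ)
    (hp : 1 ≤ p) (hpq : p ≤ q) (hq : 1 < q) (hε0 : 0 ≤ ε)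
    (hε : ε ≤ Real.sqrt ((p - 1) / (q - 1))) :
    cubeNorm q (noiseOp ε f) ≤ cubeNorm p f := by
  have hp0 : 0 < p := by linarith
  have hq0 : 0 < q := by linarith
  have h := hc_main hp hpq hq hε0 hε n f
  have nn : ∀ (g : (Fin n → Bool) → ℝ) (s : ℝ), 0 ≤ (2 ^ n : ℝ)⁻¹ * ∑ x, |g x| ^ s := fun g s =>
    mul_nonneg (by positivity) (Finset.sum_nonneg fun x _ => Real.rpow_nonneg (abs_nonneg _) _)
  have h' := Real.rpow_le_rpow (nn _ _) h (by positivity : 0 ≤ 1 / q)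
  rw [← Real.rpow_mul (nn _ _)] at h'
  rw [show q / p * (1 / q) = 1 / p by field_simp] at h'
  exact h'
end
end

section
/- Let f : {±1}^n → ℝ be a polynomial of degree at most d. Then for any 1 ≤ p ≤ 2, ‖f‖_p ≥ (p−1)^{d/2} ‖f‖_2, where the norms are the normalized ℓ_p norms on the boolean cube. -/
noncomputable section

/-- First-order inequality behind the two-point inequality. -/
theorem aux_first (q : ℝ) (hq0 : 0 ≤ q) (hq1 : q ≤ 1) (t : ℝ) (ht0 : 0 ≤ t) (ht1 : t ≤ 1) :
    2 * q * t ≤ (1 + t) ^ q - (1 - t) ^ q := by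
  have hder : ∀ x ∈ Set.Ioo (0:ℝ) 1, HasDerivAt
      (fun t : ℝ => (1 + t) ^ q - (1 - t) ^ q - 2 * q * t)
      (q * ((1 + x) ^ (q - 1) + (1 - x) ^ (q - 1) - 2)) x := by
    intro x hx
    have h1 : HasDerivAt (fun t : ℝ => (1 + t) ^ q) (1 * q * (1 + x) ^ (q - 1)) x :=
      ((hasDerivAt_id x).const_add 1).rpow_const (Or.inl (by simp; linarith [hx.1]))
    have h2 : HasDerivAt (fun t : ℝ => (1 - t) ^ q) (-1 * q * (1 - x) ^ (q - 1)) x :=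
      ((hasDerivAt_id x).const_sub 1).rpow_const (Or.inl (by simp; linarith [hx.2]))
    have h3 : HasDerivAt (fun t : ℝ => 2 * q * t) (2 * q) x := by
      simpa using (hasDerivAt_id x).const_mul (2 * q)
    exact ((h1.sub h2).sub h3).congr_deriv (by ring)
  have hmono : MonotoneOn (fun t : ℝ => (1 + t) ^ q - (1 - t) ^ q - 2 * q * t)
      (Set.Icc 0 1) := by
    apply monotoneOn_of_deriv_nonneg (convex_Icc 0 1)
    · have c1 : Continuous fun t : ℝ => (1 + t) ^ q :=
        (continuous_const.add continuous_id).rpow_const (fun _ => Or.inr hq0)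
      have c2 : Continuous fun t : ℝ => (1 - t) ^ q :=
        (continuous_const.sub continuous_id).rpow_const (fun _ => Or.inr hq0)
      exact ((c1.sub c2).sub (continuous_const.mul continuous_id)).continuousOn
    · rw [interior_Icc]
      exact fun x hx => (hder x hx).differentiableAt.differentiableWithinAt
    · rw [interior_Icc]
      intro x hx
      rw [(hder x hx).deriv]
      apply mul_nonneg hq0
      have p1 : 0 < 1 + x := by linarith [hx.1]
      have p2 : 0 < 1 - x := by linarith [hx.2]
      have hu : 0 < (1 + x) ^ (q - 1) := Real.rpow_pos_of_pos p1 _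
      have hv : 0 < (1 - x) ^ (q - 1) := Real.rpow_pos_of_pos p2 _
      have huv : 1 ≤ (1 + x) ^ (q - 1) * (1 - x) ^ (q - 1) := by
        rw [← Real.mul_rpow p1.le p2.le]
        apply Real.one_le_rpow_of_pos_of_le_one_of_nonpos
        · positivity
        · nlinarith [sq_nonneg x]
        · linarith
      nlinarith [sq_nonneg ((1 + x) ^ (q - 1) - (1 - x) ^ (q - 1))]
  have h := hmono (Set.left_mem_Icc.2 zero_le_one) ⟨ht0, ht1⟩ ht0
  simp at h
  linarith

theorem aux_second (p : ℝ) (hp1 : 1 ≤ p) (hp2 : p ≤ 2) (t : ℝ) (ht0 : 0 ≤ t) (ht1 : t ≤ 1) :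
    2 + p * (p - 1) * t ^ 2 ≤ (1 + t) ^ p + (1 - t) ^ p := by
  have hder : ∀ x : ℝ, HasDerivAt
      (fun t : ℝ => (1 + t) ^ p + (1 - t) ^ p - p * (p - 1) * t ^ 2)
      (p * ((1 + x) ^ (p - 1) - (1 - x) ^ (p - 1) - 2 * (p - 1) * x)) x := by
    intro x
    have h1 : HasDerivAt (fun t : ℝ => (1 + t) ^ p) (1 * p * (1 + x) ^ (p - 1)) x :=
      ((hasDerivAt_id x).const_add 1).rpow_const (Or.inr hp1)
    have h2 : HasDerivAt (fun t : ℝ => (1 - t) ^ p) (-1 * p * (1 - x) ^ (p - 1)) x :=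
      ((hasDerivAt_id x).const_sub 1).rpow_const (Or.inr hp1)
    have h3 : HasDerivAt (fun t : ℝ => p * (p - 1) * t ^ 2) (p * (p - 1) * (2 * x)) x := by
      simpa using (hasDerivAt_pow 2 x).const_mul (p * (p - 1))
    exact ((h1.add h2).sub h3).congr_deriv (by ring)
  have hmono : MonotoneOn (fun t : ℝ => (1 + t) ^ p + (1 - t) ^ p - p * (p - 1) * t ^ 2)
      (Set.Icc 0 1) := by
    apply monotoneOn_of_deriv_nonneg (convex_Icc 0 1)
    · exact fun x _ => (hder x).continuousAt.continuousWithinAt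
    · exact fun x _ => (hder x).differentiableAt.differentiableWithinAt
    · rw [interior_Icc]
      intro x hx
      rw [(hder x).deriv]
      apply mul_nonneg (by linarith)
      linarith [aux_first (p - 1) (by linarith) (by linarith) x hx.1.le hx.2.le]
  have h := hmono (Set.left_mem_Icc.2 zero_le_one) ⟨ht0, ht1⟩ ht0
  simp at h
  linarith

theorem aux_two_point (p : ℝ) (hp1 : 1 ≤ p) (hp2 : p ≤ 2) (t : ℝ) (ht0 : 0 ≤ t) (ht1 : t ≤ 1) :
    (1 + (p - 1) * t ^ 2) ^ (p / 2) ≤ ((1 + t) ^ p + (1 - t) ^ p) / 2 := by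
  have h0 : 0 ≤ (p - 1) * t ^ 2 := mul_nonneg (by linarith) (sq_nonneg t)
  have h1 := rpow_one_add_le_one_add_mul_self (s := (p - 1) * t ^ 2) (by linarith)
    (p := p / 2) (by linarith) (by linarith)
  linarith [aux_second p hp1 hp2 t ht0 ht1]

/-- Scalar two-point inequality. -/
theorem two_point (p : ℝ) (hp1 : 1 ≤ p) (hp2 : p ≤ 2) (A B : ℝ) (hA : 0 ≤ A) (hB : 0 ≤ B) :
    (((A + B) / 2) ^ 2 + (p - 1) * ((A - B) / 2) ^ 2) ^ (p / 2) ≤ (A ^ p + B ^ p) / 2 := by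
  wlog h : B ≤ A generalizing A B
  · have := this B A hB hA (le_of_not_ge h)
    rw [add_comm B A, add_comm (B ^ p)] at this
    rwa [← neg_sub B A, neg_div, neg_sq]
  have hs : 0 ≤ (A + B) / 2 := by positivity
  rcases hs.eq_or_lt with hs0 | hs0
  · have hA0 : A = 0 := by linarith
    have hB0 : B = 0 := by linarith
    subst hA0 hB0
    simp [Real.zero_rpow (show p / 2 ≠ 0 by linarith), Real.zero_rpow (show p ≠ 0 by linarith)]
  · set s := (A + B) / 2 with hsd
    set t := (A - B) / 2 / s with htd
    have hts : t * s = (A - B) / 2 := by rw [htd]; field_simp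
    have ht0 : 0 ≤ t := div_nonneg (by linarith) hs
    have ht1 : t ≤ 1 := by rw [htd, div_le_one hs0]; linarith
    have hAe : A = s * (1 + t) := by linarith
    have hBe : B = s * (1 - t) := by linarith
    have h0 : 0 ≤ (p - 1) * t ^ 2 := mul_nonneg (by linarith) (sq_nonneg t)
    have e : s ^ 2 + (p - 1) * ((A - B) / 2) ^ 2 = s ^ 2 * (1 + (p - 1) * t ^ 2) := by
      rw [← hts]; ring
    have e2 : (s ^ 2) ^ (p / 2) = s ^ p := by
      rw [← Real.rpow_natCast, ← Real.rpow_mul hs]; congr 1; push_cast; ring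
    rw [e, Real.mul_rpow (sq_nonneg s) (by linarith), e2]
    have eA : A ^ p = s ^ p * (1 + t) ^ p := by
      rw [← Real.mul_rpow hs (by linarith), ← hAe]
    have eB : B ^ p = s ^ p * (1 - t) ^ p := by
      rw [← Real.mul_rpow hs (by linarith), ← hBe]
    rw [eA, eB]
    have := mul_le_mul_of_nonneg_left (aux_two_point p hp1 hp2 t ht0 ht1)
      (Real.rpow_nonneg hs p)
    linarith

/-- Vector-valued two-point inequality (weighted Euclidean). -/
theorem two_point_vec {ι : Type*} [Fintype ι] (w : ι → ℝ) (hw : ∀ i, 0 ≤ w i)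
    (u v : ι → ℝ) (p : ℝ) (hp1 : 1 ≤ p) (hp2 : p ≤ 2) :
    ((∑ i, w i * ((u i + v i) / 2) ^ 2) + (p - 1) * ∑ i, w i * ((u i - v i) / 2) ^ 2) ^ (p / 2)
      ≤ ((∑ i, w i * u i ^ 2) ^ (p / 2) + (∑ i, w i * v i ^ 2) ^ (p / 2)) / 2 := by
  set U := ∑ i, w i * u i ^ 2 with hU
  set V := ∑ i, w i * v i ^ 2 with hV
  set C := ∑ i, w i * (u i * v i) with hC
  have hU0 : 0 ≤ U := Finset.sum_nonneg fun i _ => mul_nonneg (hw i) (sq_nonneg _)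
  have hV0 : 0 ≤ V := Finset.sum_nonneg fun i _ => mul_nonneg (hw i) (sq_nonneg _)
  have hCS : C ^ 2 ≤ U * V := by
    apply Finset.sum_sq_le_sum_mul_sum_of_sq_le_mul
    · exact fun i _ => mul_nonneg (hw i) (sq_nonneg _)
    · exact fun i _ => mul_nonneg (hw i) (sq_nonneg _)
    · intro i _; exact le_of_eq (by ring)
  have e1 : ∑ i, w i * ((u i + v i) / 2) ^ 2 = (U + 2 * C + V) / 4 := by
    rw [hU, hV, hC, Finset.mul_sum, ← Finset.sum_add_distrib, ← Finset.sum_add_distrib,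
      Finset.sum_div]
    exact Finset.sum_congr rfl fun i _ => by ring
  have e2 : ∑ i, w i * ((u i - v i) / 2) ^ 2 = (U - 2 * C + V) / 4 := by
    rw [hU, hV, hC, Finset.mul_sum, ← Finset.sum_sub_distrib, ← Finset.sum_add_distrib,
      Finset.sum_div]
    exact Finset.sum_congr rfl fun i _ => by ring
  have n1 : 0 ≤ ∑ i, w i * ((u i + v i) / 2) ^ 2 :=
    Finset.sum_nonneg fun i _ => mul_nonneg (hw i) (sq_nonneg _)
  have n2 : 0 ≤ ∑ i, w i * ((u i - v i) / 2) ^ 2 :=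
    Finset.sum_nonneg fun i _ => mul_nonneg (hw i) (sq_nonneg _)
  have hAU : √U ^ 2 = U := Real.sq_sqrt hU0
  have hBV : √V ^ 2 = V := Real.sq_sqrt hV0
  have hCle : C ≤ √U * √V := by
    rw [← Real.sqrt_mul hU0]; exact Real.le_sqrt_of_sq_le hCS
  have key := two_point p hp1 hp2 (√U) (√V) (Real.sqrt_nonneg _) (Real.sqrt_nonneg _)
  have r : ∀ X : ℝ, 0 ≤ X → √X ^ p = X ^ (p / 2) := by
    intro X hX
    rw [Real.sqrt_eq_rpow, ← Real.rpow_mul hX]; congr 1; ring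
  rw [r U hU0, r V hV0] at key
  refine le_trans (Real.rpow_le_rpow ?_ ?_ (by linarith)) key
  · exact add_nonneg n1 (mul_nonneg (by linarith) n2)
  · rw [e1, e2]
    have : (2 - p) * C ≤ (2 - p) * (√U * √V) := mul_le_mul_of_nonneg_left hCle (by linarith)
    nlinarith

theorem sum_finset_succ {n : ℕ} (F : Finset (Fin (n + 1)) → ℝ) :
    ∑ S, F S = ∑ S : Finset (Fin n), F (S.map (Fin.succEmb n)) +
      ∑ S : Finset (Fin n), F (insert 0 (S.map (Fin.succEmb n))) := by
  classical
  have hu : (Finset.univ : Finset (Finset (Fin (n + 1)))) =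
      (insert 0 ((Finset.univ : Finset (Fin n)).map (Fin.succEmb n))).powerset := by
    rw [← Finset.powerset_univ]
    congr 1
    ext x
    refine Fin.cases ?_ (fun i => ?_) x <;> simp
  have hp : ((Finset.univ : Finset (Fin n)).map (Fin.succEmb n)).powerset =
      (Finset.univ : Finset (Finset (Fin n))).map
        ⟨fun S => S.map (Fin.succEmb n), Finset.map_injective _⟩ := by
    ext T
    simp only [Finset.mem_powerset, Finset.mem_map, Finset.mem_univ, true_and,
      Function.Embedding.coeFn_mk]
    rw [Finset.subset_map_iff]
    simp [eq_comm]
  rw [hu, Finset.sum_powerset_insert (by simp), hp, Finset.sum_map, Finset.sum_map]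
  rfl

theorem sum_cube_succ {n : ℕ} (F : (Fin (n + 1) → Bool) → ℝ) :
    ∑ x, F x = ∑ x : Fin n → Bool, F (Fin.cons false x) +
      ∑ x : Fin n → Bool, F (Fin.cons true x) := by
  rw [← (Fin.consEquiv fun _ : Fin (n + 1) => Bool).sum_comp, Fintype.sum_prod_type]
  simp [Fin.consEquiv, add_comm]

theorem fourier_succ_map {n : ℕ} (f : (Fin (n + 1) → Bool) → ℝ) (S : Finset (Fin n)) :
    cubeFourier f (S.map (Fin.succEmb n)) =
      (cubeFourier (fun x => f (Fin.cons false x)) S +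
        cubeFourier (fun x => f (Fin.cons true x)) S) / 2 := by
  simp only [cubeFourier, sum_cube_succ, cubeChar, Finset.prod_map, Fin.coe_succEmb,
    Fin.cons_succ, pow_succ, mul_inv]
  ring

theorem fourier_succ_insert {n : ℕ} (f : (Fin (n + 1) → Bool) → ℝ) (S : Finset (Fin n)) :
    cubeFourier f (insert 0 (S.map (Fin.succEmb n))) =
      (cubeFourier (fun x => f (Fin.cons false x)) S -
        cubeFourier (fun x => f (Fin.cons true x)) S) / 2 := by
  have h : (0 : Fin (n + 1)) ∉ S.map (Fin.succEmb n) := by simp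
  simp only [cubeFourier, sum_cube_succ, cubeChar, Finset.prod_insert h, Finset.prod_map,
    Fin.coe_succEmb, Fin.cons_succ, Fin.cons_zero, pow_succ, mul_inv]
  simp
  ring

/-- Weighted Fourier energy `∑_S r^{|S|} f̂(S)²`. -/
def energy {n : ℕ} (r : ℝ) (f : (Fin n → Bool) → ℝ) : ℝ :=
  ∑ S : Finset (Fin n), r ^ S.card * cubeFourier f S ^ 2

theorem energy_succ {n : ℕ} (r : ℝ) (f : (Fin (n + 1) → Bool) → ℝ) :
    energy r f =
      (∑ S : Finset (Fin n), r ^ S.card * ((cubeFourier (fun x => f (Fin.cons false x)) S +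
        cubeFourier (fun x => f (Fin.cons true x)) S) / 2) ^ 2) +
      r * ∑ S : Finset (Fin n), r ^ S.card * ((cubeFourier (fun x => f (Fin.cons false x)) S -
        cubeFourier (fun x => f (Fin.cons true x)) S) / 2) ^ 2 := by
  have h : ∀ S : Finset (Fin n), (0 : Fin (n + 1)) ∉ S.map (Fin.succEmb n) := by simp
  rw [energy, sum_finset_succ, Finset.mul_sum]
  congr 1
  · exact Finset.sum_congr rfl fun S _ => by rw [fourier_succ_map, Finset.card_map]
  · refine Finset.sum_congr rfl fun S _ => ?_
    rw [fourier_succ_insert, Finset.card_insert_of_notMem (h S), Finset.card_map, pow_succ]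
    ring

theorem energy_zero (r : ℝ) (f : (Fin 0 → Bool) → ℝ) : energy r f = f (fun _ => false) ^ 2 := by
  have h : (default : Finset (Fin 0)) = ∅ := rfl
  simp [energy, cubeFourier, cubeChar, h]
  exact congrArg (fun x => f x ^ 2) (Subsingleton.elim _ _)

theorem parseval : ∀ {n : ℕ} (f : (Fin n → Bool) → ℝ),
    energy 1 f = (2 ^ n : ℝ)⁻¹ * ∑ x, f x ^ 2
  | 0, f => by
    rw [energy_zero]; simp
    exact congrArg (fun x => f x ^ 2) (Subsingleton.elim _ _)
  | n + 1, f => by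
    have h0 := parseval fun x : Fin n → Bool => f (Fin.cons false x)
    have h1 := parseval fun x : Fin n → Bool => f (Fin.cons true x)
    have e : energy 1 f = (energy 1 (fun x : Fin n → Bool => f (Fin.cons false x)) +
        energy 1 (fun x : Fin n → Bool => f (Fin.cons true x))) / 2 := by
      rw [energy_succ, one_mul, energy, energy, ← Finset.sum_add_distrib,
        ← Finset.sum_add_distrib, Finset.sum_div]
      exact Finset.sum_congr rfl fun S _ => by ring
    rw [e, h0, h1, sum_cube_succ, pow_succ, mul_inv]
    ring

/-- Bonami's inequality. -/
theorem bonami (p : ℝ) (hp1 : 1 ≤ p) (hp2 : p ≤ 2) : ∀ {n : ℕ} (f : (Fin n → Bool) → ℝ),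
    energy (p - 1) f ^ (p / 2) ≤ (2 ^ n : ℝ)⁻¹ * ∑ x, |f x| ^ p
  | 0, f => by
    rw [energy_zero, ← sq_abs, ← Real.rpow_natCast, ← Real.rpow_mul (abs_nonneg _)]
    have : ((2 : ℕ) : ℝ) * (p / 2) = p := by push_cast; ring
    rw [this]
    simp
    exact le_of_eq (congrArg (fun x => |f x| ^ p) (Subsingleton.elim _ _))
  | n + 1, f => by
    have h0 := bonami p hp1 hp2 fun x : Fin n → Bool => f (Fin.cons false x)
    have h1 := bonami p hp1 hp2 fun x : Fin n → Bool => f (Fin.cons true x)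
    have key := two_point_vec (fun S : Finset (Fin n) => (p - 1) ^ S.card)
      (fun S => pow_nonneg (by linarith) _)
      (cubeFourier fun x : Fin n → Bool => f (Fin.cons false x))
      (cubeFourier fun x : Fin n → Bool => f (Fin.cons true x)) p hp1 hp2
    rw [← energy_succ] at key
    rw [sum_cube_succ, pow_succ, mul_inv]
    simp only [energy] at h0 h1 key ⊢
    linarith

/-- Hypercontractive norm inequality for low-degree polynomials on the boolean cube:
if `f` has degree at most `d` (all Fourier coefficients on sets of size `> d` vanish),
then for all `1 ≤ p ≤ 2`, `‖f‖_p ≥ (p-1)^{d/2} ‖f‖_2`. -/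
theorem cubeNorm_ge_of_degree_le {n d : ℕ} (f : (Fin n → Bool) → ℝ)
    (hdeg : ∀ S : Finset (Fin n), d < S.card → cubeFourier f S = 0)
    (p : ℝ) (hp1 : 1 ≤ p) (hp2 : p ≤ 2) :
    (p - 1) ^ ((d : ℝ) / 2) * cubeNorm 2 f ≤ cubeNorm p f := by
  have hq : 0 ≤ p - 1 := by linarith
  have hp0 : p ≠ 0 := by linarith
  have hE1 : 0 ≤ energy 1 f :=
    Finset.sum_nonneg fun S _ => mul_nonneg (pow_nonneg zero_le_one _) (sq_nonneg _)
  have hEp : 0 ≤ energy (p - 1) f :=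
    Finset.sum_nonneg fun S _ => mul_nonneg (pow_nonneg hq _) (sq_nonneg _)
  have h2 : cubeNorm 2 f = energy 1 f ^ (1 / 2 : ℝ) := by
    rw [parseval, cubeNorm]
    simp
  have hlow : (p - 1) ^ d * energy 1 f ≤ energy (p - 1) f := by
    rw [energy, energy, Finset.mul_sum]
    refine Finset.sum_le_sum fun S _ => ?_
    rcases lt_or_ge d S.card with h | h
    · simp [hdeg S h]
    · rw [one_pow, one_mul]
      exact mul_le_mul_of_nonneg_right
        (pow_le_pow_of_le_one hq (by linarith) h) (sq_nonneg _)
  have hd : (p - 1) ^ ((d : ℝ) / 2) = ((p - 1) ^ d) ^ (1 / 2 : ℝ) := by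
    rw [← Real.rpow_natCast, ← Real.rpow_mul hq]
    congr 1
    ring
  rw [h2, hd, ← Real.mul_rpow (pow_nonneg hq _) hE1]
  calc ((p - 1) ^ d * energy 1 f) ^ (1 / 2 : ℝ)
      ≤ energy (p - 1) f ^ (1 / 2 : ℝ) :=
        Real.rpow_le_rpow (mul_nonneg (pow_nonneg hq _) hE1) hlow (by norm_num)
    _ = (energy (p - 1) f ^ (p / 2)) ^ (1 / p) := by
        rw [← Real.rpow_mul hEp]
        congr 1
        field_simp
    _ ≤ cubeNorm p f :=
        Real.rpow_le_rpow (Real.rpow_nonneg hEp _) (bonami p hp1 hp2 f)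
          (div_nonneg zero_le_one (by linarith))
end
end

section
/- Let f : ℝ^{n+1} → ℝ be a polynomial of degree at most d. Then for any q ≥ 2, ‖f‖_{L^q(S^n)} ≤ (q−1)^{d/2} ‖f‖_{L^2(S^n)}. -/
noncomputable section

open MeasureTheory

/-- auxiliary: `(A - B) ≤ m t (A + B)`. -/
lemma hc_aux1 (m : ℝ) (hm : 1 ≤ m) (t : ℝ) (ht0 : 0 ≤ t) (ht1 : t ≤ 1) :
    (1 + t) ^ m - (1 - t) ^ m ≤ m * t * ((1 + t) ^ m + (1 - t) ^ m) := by
  have hder : ∀ x ∈ Set.Icc (0:ℝ) 1, HasDerivAt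
      (fun t : ℝ => m * t * ((1 + t) ^ m + (1 - t) ^ m) - ((1 + t) ^ m - (1 - t) ^ m))
      (m * 1 * ((1 + x) ^ m + (1 - x) ^ m) + m * x * (1 * m * (1 + x) ^ (m - 1) + (-1) * m * (1 - x) ^ (m - 1))
        - (1 * m * (1 + x) ^ (m - 1) - (-1) * m * (1 - x) ^ (m - 1))) x := by
    intro x hx
    have h1 : HasDerivAt (fun t : ℝ => (1 + t) ^ m) (1 * m * (1 + x) ^ (m - 1)) x :=
      ((hasDerivAt_id x).const_add 1).rpow_const (Or.inr hm)
    have h2 : HasDerivAt (fun t : ℝ => (1 - t) ^ m) ((-1) * m * (1 - x) ^ (m - 1)) x :=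
      ((hasDerivAt_id x).const_sub 1).rpow_const (Or.inr hm)
    exact (((hasDerivAt_id x).const_mul m).mul (h1.add h2)).sub (h1.sub h2)
  have hmono : MonotoneOn (fun t : ℝ => m * t * ((1 + t) ^ m + (1 - t) ^ m) - ((1 + t) ^ m - (1 - t) ^ m))
      (Set.Icc 0 1) := by
    apply monotoneOn_of_deriv_nonneg (convex_Icc 0 1)
    · intro x hx; exact (hder x hx).continuousAt.continuousWithinAt
    · intro x hx; exact (hder x (interior_subset hx)).differentiableAt.differentiableWithinAt
    · intro x hx
      rw [(hder x (interior_subset hx)).deriv]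
      rw [interior_Icc] at hx
      have e1 : (1 + x) ^ m = (1 + x) * (1 + x) ^ (m - 1) := by
        rw [Real.rpow_sub_one (by linarith [hx.1])]; field_simp [show (1 + x) ≠ 0 by linarith [hx.1]]
      have e2 : (1 - x) ^ m = (1 - x) * (1 - x) ^ (m - 1) := by
        rw [Real.rpow_sub_one (by linarith [hx.2])]; field_simp [show (1 - x) ≠ 0 by linarith [hx.2]]
      have h3 : (1 - x) ^ (m - 1) ≤ (1 + x) ^ (m - 1) :=
        Real.rpow_le_rpow (by linarith [hx.2]) (by linarith [hx.1]) (by linarith)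
      rw [e1, e2]
      have : 0 ≤ m * x * (1 + m) * ((1 + x) ^ (m - 1) - (1 - x) ^ (m - 1)) := by
        have := hx.1
        have h4 : 0 ≤ (1 + x) ^ (m - 1) - (1 - x) ^ (m - 1) := by linarith
        positivity
      nlinarith
  have := hmono (Set.left_mem_Icc.2 zero_le_one) ⟨ht0, ht1⟩ ht0
  simp at this
  linarith

lemma hc_aux2 (q : ℝ) (hq : 2 ≤ q) (t : ℝ) (ht0 : 0 ≤ t) (ht1 : t ≤ 1) :
    ((1 + t) ^ q + (1 - t) ^ q) / 2 ≤ (1 + (q - 1) * t ^ 2) ^ (q / 2) := by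
  have hpos : ∀ x : ℝ, 0 < 1 + (q - 1) * x ^ 2 := fun x => by nlinarith [sq_nonneg x]
  have hder : ∀ x ∈ Set.Icc (0:ℝ) 1, HasDerivAt
      (fun t : ℝ => ((1 + t) ^ q + (1 - t) ^ q) * (1 + (q - 1) * t ^ 2) ^ (-(q / 2)))
      ((1 * q * (1 + x) ^ (q - 1) + (-1) * q * (1 - x) ^ (q - 1)) * (1 + (q - 1) * x ^ 2) ^ (-(q / 2))
       + ((1 + x) ^ q + (1 - x) ^ q) * (((q - 1) * (2 * x)) * (-(q / 2)) * (1 + (q - 1) * x ^ 2) ^ (-(q / 2) - 1))) x := by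
    intro x hx
    have h1 : HasDerivAt (fun t : ℝ => (1 + t) ^ q) (1 * q * (1 + x) ^ (q - 1)) x :=
      ((hasDerivAt_id x).const_add 1).rpow_const (Or.inr (by linarith))
    have h2 : HasDerivAt (fun t : ℝ => (1 - t) ^ q) ((-1) * q * (1 - x) ^ (q - 1)) x :=
      ((hasDerivAt_id x).const_sub 1).rpow_const (Or.inr (by linarith))
    have h3 : HasDerivAt (fun t : ℝ => 1 + (q - 1) * t ^ 2) ((q - 1) * (2 * x)) x := by
      have := ((hasDerivAt_pow 2 x).const_mul (q - 1)).const_add 1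
      simpa using this
    exact (h1.add h2).mul (h3.rpow_const (Or.inl (hpos x).ne'))
  have hmono : AntitoneOn (fun t : ℝ => ((1 + t) ^ q + (1 - t) ^ q) * (1 + (q - 1) * t ^ 2) ^ (-(q / 2)))
      (Set.Icc 0 1) := by
    apply antitoneOn_of_deriv_nonpos (convex_Icc 0 1)
    · intro x hx; exact (hder x hx).continuousAt.continuousWithinAt
    · intro x hx; exact (hder x (interior_subset hx)).differentiableAt.differentiableWithinAt
    · intro x hx
      rw [(hder x (interior_subset hx)).deriv]
      rw [interior_Icc] at hx
      have e1 : (1 + x) ^ q = (1 + x) * (1 + x) ^ (q - 1) := by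
        rw [Real.rpow_sub_one (by linarith [hx.1])]; field_simp [show (1 + x) ≠ 0 by linarith [hx.1]]
      have e2 : (1 - x) ^ q = (1 - x) * (1 - x) ^ (q - 1) := by
        rw [Real.rpow_sub_one (by linarith [hx.2])]; field_simp [show (1 - x) ≠ 0 by linarith [hx.2]]
      have e3 : (1 + (q - 1) * x ^ 2) ^ (-(q / 2)) = (1 + (q - 1) * x ^ 2) * (1 + (q - 1) * x ^ 2) ^ (-(q / 2) - 1) := by
        rw [Real.rpow_sub_one (hpos x).ne']; field_simp [(hpos x).ne']
      have key := hc_aux1 (q - 1) (by linarith) x hx.1.le hx.2.le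
      have hW : 0 ≤ (1 + (q - 1) * x ^ 2) ^ (-(q / 2) - 1) := Real.rpow_nonneg (hpos x).le _
      rw [e1, e2, e3]
      have hq0 : 0 ≤ q * (1 + (q - 1) * x ^ 2) ^ (-(q / 2) - 1) := by positivity
      have := mul_nonneg hq0 (sub_nonneg.2 key)
      linear_combination this
  have := hmono (Set.left_mem_Icc.2 zero_le_one) ⟨ht0, ht1⟩ ht0
  simp only [Real.rpow_neg (hpos t).le] at this
  simp at this
  rw [← div_eq_mul_inv, div_le_iff₀ (Real.rpow_pos_of_pos (hpos t) _)] at this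
  linarith

lemma hc_two_point0 (q : ℝ) (hq : 2 ≤ q) (a b : ℝ) (hb : 0 ≤ b) (hab : b ≤ a) :
    ((a + b) ^ q + (a - b) ^ q) / 2 ≤ (a ^ 2 + (q - 1) * b ^ 2) ^ (q / 2) := by
  rcases (hb.trans hab).eq_or_lt with h0 | h0
  · have : b = 0 := by linarith
    subst this; subst h0
    simp [Real.zero_rpow (show q ≠ 0 by linarith), Real.zero_rpow (show q / 2 ≠ 0 by linarith)]
  have h := hc_aux2 q hq (b / a) (by positivity) ((div_le_one h0).2 hab)
  have e1 : (a + b) ^ q = a ^ q * (1 + b / a) ^ q := by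
    rw [← Real.mul_rpow h0.le (by positivity)]; congr 1; field_simp
  have e2 : (a - b) ^ q = a ^ q * (1 - b / a) ^ q := by
    rw [← Real.mul_rpow h0.le (by rw [sub_nonneg]; exact (div_le_one h0).2 hab)]; congr 1; field_simp
  have e3 : (a ^ 2 + (q - 1) * b ^ 2) ^ (q / 2) = a ^ q * (1 + (q - 1) * (b / a) ^ 2) ^ (q / 2) := by
    have : a ^ q = (a ^ 2) ^ (q / 2) := by
      rw [← Real.rpow_natCast, ← Real.rpow_mul h0.le]; congr 1; push_cast; ring
    rw [this, ← Real.mul_rpow (by positivity) (by nlinarith [sq_nonneg (b / a)])]; congr 1; field_simp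
  rw [e1, e2, e3]
  have := mul_le_mul_of_nonneg_left h (Real.rpow_nonneg h0.le q)
  linarith

lemma hc_two_point (q : ℝ) (hq : 2 ≤ q) (a b : ℝ) :
    (|a + b| ^ q + |a - b| ^ q) / 2 ≤ (a ^ 2 + (q - 1) * b ^ 2) ^ (q / 2) := by
  have key : ∀ a b : ℝ, 0 ≤ a → 0 ≤ b →
      (|a + b| ^ q + |a - b| ^ q) / 2 ≤ (a ^ 2 + (q - 1) * b ^ 2) ^ (q / 2) := by
    intro a b ha hb
    rcases le_total b a with h | h
    · rw [abs_of_nonneg (by linarith), abs_of_nonneg (by linarith)]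
      exact hc_two_point0 q hq a b hb h
    · rw [abs_of_nonneg (by linarith), abs_sub_comm, abs_of_nonneg (by linarith), add_comm a b]
      refine (hc_two_point0 q hq b a ha h).trans (Real.rpow_le_rpow ?_ ?_ (by linarith))
      · nlinarith [sq_nonneg a, sq_nonneg b]
      · have : a ^ 2 ≤ b ^ 2 := by gcongr
        nlinarith
  have h := key |a| |b| (abs_nonneg a) (abs_nonneg b)
  rw [sq_abs, sq_abs] at h
  refine le_trans (le_of_eq ?_) h
  rcases abs_cases a with ⟨ha, _⟩ | ⟨ha, _⟩ <;> rcases abs_cases b with ⟨hb, _⟩ | ⟨hb, _⟩ <;> rw [ha, hb]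
  · rw [show a + -b = a - b by ring, show a - -b = a + b by ring]; ring
  · rw [show -a + b = -(a - b) by ring, show -a - b = -(a + b) by ring, abs_neg, abs_neg]; ring
  · rw [show -a + -b = -(a + b) by ring, show -a - -b = -(a - b) by ring, abs_neg, abs_neg]

/-- weighted convexity split -/
lemma hc_split (q : ℝ) (hq : 2 ≤ q) (α β : ℝ) (hα : 0 < α) (hβ : 0 < β) (hαβ : α + β = 1) (a b : ℝ) :
    (|a + b| ^ q + |a - b| ^ q) / 2 ≤
      α ^ (1 - q / 2) * |a| ^ q + β ^ (1 - q / 2) * ((q - 1) ^ (q / 2) * |b| ^ q) := by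
  refine (hc_two_point q hq a b).trans ?_
  have hb0 : 0 ≤ (q - 1) * b ^ 2 := mul_nonneg (by linarith) (sq_nonneg b)
  have hc := (convexOn_rpow (show (1:ℝ) ≤ q / 2 by linarith)).2
    (show a ^ 2 / α ∈ Set.Ici (0:ℝ) from by simp only [Set.mem_Ici]; positivity)
    (show (q - 1) * b ^ 2 / β ∈ Set.Ici (0:ℝ) from div_nonneg hb0 hβ.le) hα.le hβ.le hαβ
  simp only [smul_eq_mul] at hc
  rw [mul_div_cancel₀ _ hα.ne', mul_div_cancel₀ _ hβ.ne'] at hc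
  refine hc.trans (le_of_eq ?_)
  have e : ∀ x : ℝ, (x ^ 2) ^ (q / 2) = |x| ^ q := by
    intro x
    rw [← sq_abs, ← Real.rpow_natCast, ← Real.rpow_mul (abs_nonneg x)]; congr 1; push_cast; ring
  rw [Real.div_rpow (sq_nonneg a) hα.le, Real.div_rpow hb0 hβ.le, Real.mul_rpow (by linarith) (sq_nonneg b),
    e, e, Real.rpow_sub hα, Real.rpow_sub hβ, Real.rpow_one, Real.rpow_one]
  ring

lemma hc_opt (q : ℝ) (hq : 2 ≤ q) (A B C : ℝ) (hA : 0 ≤ A) (hB : 0 ≤ B) (hC : 0 ≤ C)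
    (h : ∀ α β : ℝ, 0 < α → 0 < β → α + β = 1 →
      C ≤ α ^ (1 - q / 2) * A + β ^ (1 - q / 2) * ((q - 1) ^ (q / 2) * B)) :
    C ^ (2 / q) ≤ A ^ (2 / q) + (q - 1) * B ^ (2 / q) := by
  have hq0 : (0:ℝ) < q := by linarith
  apply le_of_forall_pos_le_add
  intro ε hε
  set a := A ^ (2 / q) + ε / 2 with ha
  set b := (q - 1) * B ^ (2 / q) + ε / 2 with hb
  have hA' : 0 ≤ A ^ (2 / q) := Real.rpow_nonneg hA _
  have hB' : 0 ≤ B ^ (2 / q) := Real.rpow_nonneg hB _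
  have hB2 : 0 ≤ (q - 1) * B ^ (2 / q) := mul_nonneg (by linarith) hB'
  have ha0 : 0 < a := by positivity
  have hb0 : 0 < b := by positivity
  have inv : ∀ x : ℝ, 0 ≤ x → (x ^ (2 / q)) ^ (q / 2) = x := by
    intro x hx
    rw [← Real.rpow_mul hx, show 2 / q * (q / 2) = 1 by field_simp, Real.rpow_one]
  have h1 : A ≤ a ^ (q / 2) := by
    nth_rw 1 [← inv A hA]
    exact Real.rpow_le_rpow hA' (by linarith) (by linarith)
  have h2 : (q - 1) ^ (q / 2) * B ≤ b ^ (q / 2) := by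
    nth_rw 1 [← inv B hB]
    rw [← Real.mul_rpow (by linarith) hB']
    exact Real.rpow_le_rpow hB2 (by linarith) (by linarith)
  have h3 := h (a / (a + b)) (b / (a + b)) (by positivity) (by positivity) (by field_simp)
  have e : ∀ x : ℝ, 0 < x → (x / (a + b)) ^ (1 - q / 2) * x ^ (q / 2) = x / (a + b) * (a + b) ^ (q / 2) := by
    intro x hx
    have hs : 0 < a + b := by positivity
    rw [Real.div_rpow hx.le hs.le, Real.rpow_sub hx, Real.rpow_sub hs, Real.rpow_one, Real.rpow_one]
    have := (Real.rpow_pos_of_pos hx (q/2)).ne'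
    have := (Real.rpow_pos_of_pos hs (q/2)).ne'
    field_simp
  have h4 : C ≤ (a + b) ^ (q / 2) := by
    calc C ≤ _ := h3
      _ ≤ (a / (a + b)) ^ (1 - q / 2) * a ^ (q / 2) + (b / (a + b)) ^ (1 - q / 2) * b ^ (q / 2) := by
          gcongr
      _ = (a + b) ^ (q / 2) := by
          rw [e a ha0, e b hb0, ← add_mul, ← add_div, div_self (by positivity), one_mul]
  calc C ^ (2 / q) ≤ ((a + b) ^ (q / 2)) ^ (2 / q) := Real.rpow_le_rpow hC h4 (by positivity)
    _ = a + b := by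
      rw [← Real.rpow_mul (by positivity), show q / 2 * (2 / q) = 1 by field_simp, Real.rpow_one]
    _ = _ := by rw [ha, hb]; ring

section cube
variable {E : Type*} [AddCommGroup E]

/-- Fréchet polynomials of degree at most `d` (via iterated differences). -/
def HcDeg : ℕ → (E → ℝ) → Prop
  | 0, F => ∀ x y, F x = F y
  | (d + 1), F => ∀ v, HcDeg d (fun x => F (x + v) - F x)

lemma HcDeg.zero (d : ℕ) : HcDeg d (fun _ : E => (0:ℝ)) := by
  induction d with
  | zero => intro x y; rfl
  | succ d ih => intro v; simpa using ih

lemma HcDeg.const (d : ℕ) (c : ℝ) : HcDeg d (fun _ : E => c) := by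
  cases d with
  | zero => intro x y; rfl
  | succ d => intro v; simpa using HcDeg.zero d

lemma HcDeg.add {d : ℕ} {F G : E → ℝ} (hF : HcDeg d F) (hG : HcDeg d G) :
    HcDeg d (fun x => F x + G x) := by
  induction d generalizing F G with
  | zero => intro x y; simp only; rw [hF x y, hG x y]
  | succ d ih =>
    intro v
    have := ih (hF v) (hG v)
    convert this using 2
    ring

lemma HcDeg.smul {d : ℕ} {F : E → ℝ} (c : ℝ) (hF : HcDeg d F) :
    HcDeg d (fun x => c * F x) := by
  induction d generalizing F with
  | zero => intro x y; simp only; rw [hF x y]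
  | succ d ih =>
    intro v
    have := ih (hF v)
    convert this using 2
    ring

lemma HcDeg.shift {d : ℕ} {F : E → ℝ} (w : E) (hF : HcDeg d F) :
    HcDeg d (fun x => F (x + w)) := by
  induction d generalizing F with
  | zero => intro x y; exact hF _ _
  | succ d ih =>
    intro v
    have := ih (hF v)
    have e : (fun x => F (x + v + w) - F (x + w)) = fun x => F (x + w + v) - F (x + w) := by
      funext x; rw [add_right_comm]
    rw [← e] at this
    exact this

lemma HcDeg.succ {d : ℕ} {F : E → ℝ} (hF : HcDeg d F) : HcDeg (d + 1) F := by
  induction d generalizing F with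
  | zero =>
    intro v x y
    simp only
    rw [hF (x + v) x, hF (y + v) y]; simp
  | succ d ih => intro v; exact ih (hF v)

lemma HcDeg.mono {d e : ℕ} (h : d ≤ e) {F : E → ℝ} (hF : HcDeg d F) : HcDeg e F := by
  induction h with
  | refl => exact hF
  | step _ ih => exact ih.succ

lemma HcDeg.mul {a b : ℕ} {F G : E → ℝ} (hF : HcDeg a F) (hG : HcDeg b G) :
    HcDeg (a + b) (fun x => F x * G x) := by
  induction hn : a + b generalizing a b F G with
  | zero =>
    obtain ⟨rfl, rfl⟩ : a = 0 ∧ b = 0 := by omega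
    intro x y; simp only; rw [hF x y, hG x y]
  | succ n ih =>
    intro v
    have h1 : HcDeg n (fun x => (F (x + v) - F x) * G (x + v)) := by
      cases a with
      | zero =>
        have : (fun x => (F (x + v) - F x) * G (x + v)) = fun _ => 0 := by
          funext x; rw [hF (x + v) x]; ring
        rw [this]; exact HcDeg.zero _
      | succ a => exact ih (hF v) (hG.shift v) (by omega)
    have h2 : HcDeg n (fun x => F x * (G (x + v) - G x)) := by
      cases b with
      | zero =>
        have : (fun x => F x * (G (x + v) - G x)) = fun _ => 0 := by
          funext x; rw [hG (x + v) x]; ring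
        rw [this]; exact HcDeg.zero _
      | succ b => exact ih hF (hG v) (by omega)
    convert h1.add h2 using 2
    ring

lemma HcDeg.comp {d : ℕ} {F : E → ℝ} (A : E →+ E) (hF : HcDeg d F) :
    HcDeg d (fun x => F (A x)) := by
  induction d generalizing F with
  | zero => intro x y; exact hF _ _
  | succ d ih =>
    intro v
    have := ih (hF (A v))
    convert this using 3
    simp

lemma HcDeg.even {d : ℕ} {F : E → ℝ} (hF : HcDeg d F) (v : E) :
    HcDeg d (fun x => (F (x + v) + F (x - v)) / 2) := by
  have := ((hF.shift v).add (hF.shift (-v))).smul (1 / 2)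
  convert this using 2
  simp only [sub_eq_add_neg]; ring

lemma HcDeg.odd {d : ℕ} {F : E → ℝ} (hF : HcDeg (d + 1) F) (v : E) :
    HcDeg d (fun x => (F (x + v) - F (x - v)) / 2) := by
  have := ((hF (v + v)).shift (-v)).smul (1 / 2)
  convert this using 2 with x
  rw [show x + -v + (v + v) = x + v by abel, ← sub_eq_add_neg]; ring

/-- expectation over random signs of `F (∑ ± v_j)`. -/
def HcEx : List E → (E → ℝ) → ℝ
  | [], F => F 0
  | (v :: l), F => HcEx l (fun x => (F (x + v) + F (x - v)) / 2)

lemma HcEx_add (l : List E) (F G : E → ℝ) :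
    HcEx l (fun x => F x + G x) = HcEx l F + HcEx l G := by
  induction l generalizing F G with
  | nil => rfl
  | cons v l ih =>
    simp only [HcEx]
    rw [← ih]; congr 1; funext x; ring

lemma HcEx_smul (l : List E) (c : ℝ) (F : E → ℝ) :
    HcEx l (fun x => c * F x) = c * HcEx l F := by
  induction l generalizing F with
  | nil => rfl
  | cons v l ih =>
    simp only [HcEx]
    rw [← ih]; congr 1; funext x; ring

lemma HcEx_const (l : List E) (c : ℝ) : HcEx l (fun _ => c) = c := by
  induction l with
  | nil => rfl
  | cons v l ih => simp only [HcEx]; simpa using ih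

lemma HcEx_mono (l : List E) {F G : E → ℝ} (h : ∀ x, F x ≤ G x) : HcEx l F ≤ HcEx l G := by
  induction l generalizing F G with
  | nil => exact h 0
  | cons v l ih =>
    simp only [HcEx]
    apply ih
    intro x; linarith [h (x + v), h (x - v)]

lemma HcEx_nonneg (l : List E) {F : E → ℝ} (h : ∀ x, 0 ≤ F x) : 0 ≤ HcEx l F := by
  have := HcEx_mono l (F := fun _ => 0) h
  rwa [HcEx_const] at this

/-- hypercontractivity on the discrete cube. -/
lemma HcEx_hyper (q : ℝ) (hq : 2 ≤ q) (l : List E) (d : ℕ) (F : E → ℝ) (hF : HcDeg d F) :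
    (HcEx l (fun x => |F x| ^ q)) ^ (2 / q) ≤ (q - 1) ^ d * HcEx l (fun x => F x ^ 2) := by
  have hq0 : (0:ℝ) < q := by linarith
  have hq1 : (1:ℝ) ≤ q - 1 := by linarith
  induction l generalizing d F with
  | nil =>
    simp only [HcEx]
    rw [← Real.rpow_mul (abs_nonneg _), show q * (2 / q) = (2:ℕ) by push_cast; field_simp,
      Real.rpow_natCast, sq_abs]
    have : 1 ≤ (q - 1) ^ d := one_le_pow₀ hq1
    nlinarith [sq_nonneg (F 0)]
  | cons v l ih =>
    simp only [HcEx]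
    set G : E → ℝ := fun x => (F (x + v) + F (x - v)) / 2 with hG
    set H : E → ℝ := fun x => (F (x + v) - F (x - v)) / 2 with hH
    have e1 : ∀ x, F (x + v) = G x + H x := fun x => by simp only [hG, hH]; ring
    have e2 : ∀ x, F (x - v) = G x - H x := fun x => by simp only [hG, hH]; ring
    have hopt := hc_opt q hq (HcEx l fun x => |G x| ^ q) (HcEx l fun x => |H x| ^ q)
      (HcEx l fun x => (|F (x + v)| ^ q + |F (x - v)| ^ q) / 2)
      (HcEx_nonneg l fun x => by positivity) (HcEx_nonneg l fun x => by positivity)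
      (HcEx_nonneg l fun x => by positivity) (by
        intro α β hα hβ hαβ
        rw [← HcEx_smul, ← HcEx_smul, ← HcEx_smul, ← HcEx_add]
        apply HcEx_mono
        intro x
        rw [e1, e2]
        exact hc_split q hq α β hα hβ hαβ _ _)
    refine hopt.trans ?_
    have hGd := ih d G (hF.even v)
    have hHd : (q - 1) * (HcEx l fun x => |H x| ^ q) ^ (2 / q) ≤ (q - 1) ^ d * HcEx l fun x => H x ^ 2 := by
      cases d with
      | zero =>
        have : H = fun _ => 0 := by
          funext x; simp only [hH]; rw [hF (x + v) (x - v)]; simp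
        rw [this]
        simp [HcEx_const, Real.zero_rpow hq0.ne', Real.zero_rpow (show 2 / q ≠ 0 by positivity)]
      | succ d =>
        have := ih d H (hF.odd v)
        rw [pow_succ', mul_assoc]
        exact mul_le_mul_of_nonneg_left this (by linarith)
    calc _ ≤ (q - 1) ^ d * (HcEx l fun x => G x ^ 2) + (q - 1) ^ d * HcEx l fun x => H x ^ 2 :=
          add_le_add hGd hHd
      _ = _ := by
        rw [← mul_add, ← HcEx_add]
        congr 2
        funext x
        rw [e1, e2]; ring

end cube

/-- polynomial functions have bounded degree -/
lemma HcDeg_eval {N d : ℕ} (P : MvPolynomial (Fin N) ℝ) (hP : P.totalDegree ≤ d) :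
    HcDeg d (fun x : EuclideanSpace ℝ (Fin N) => MvPolynomial.eval (fun i => x i) P) := by
  have hX : ∀ i : Fin N, HcDeg 1 (fun x : EuclideanSpace ℝ (Fin N) => x i) := by
    intro i v x y; simp
  have hXp : ∀ (i : Fin N) (k : ℕ), HcDeg k (fun x : EuclideanSpace ℝ (Fin N) => x i ^ k) := by
    intro i k
    induction k with
    | zero => simpa using HcDeg.const (E := EuclideanSpace ℝ (Fin N)) 0 1
    | succ k ih => simpa [pow_succ] using ih.mul (hX i)
  have hprod : ∀ (s : Finset (Fin N)) (m : Fin N →₀ ℕ),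
      HcDeg (∑ i ∈ s, m i) (fun x : EuclideanSpace ℝ (Fin N) => ∏ i ∈ s, x i ^ m i) := by
    intro s m
    induction s using Finset.induction_on with
    | empty => simpa using HcDeg.const (E := EuclideanSpace ℝ (Fin N)) 0 1
    | insert a s ha ih =>
      simp only [Finset.prod_insert ha, Finset.sum_insert ha]
      exact (hXp a (m a)).mul ih
  have hsum : ∀ (S : Finset (Fin N →₀ ℕ)), (∀ m ∈ S, (∑ i ∈ m.support, m i) ≤ d) →
      HcDeg d (fun x : EuclideanSpace ℝ (Fin N) => ∑ m ∈ S, P.coeff m * ∏ i ∈ m.support, x i ^ m i) := by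
    intro S
    induction S using Finset.induction_on with
    | empty => intro _; simpa using HcDeg.zero (E := EuclideanSpace ℝ (Fin N)) d
    | insert a s ha ih =>
      intro h
      simp only [Finset.sum_insert ha]
      exact (((hprod _ a).mono (h a (Finset.mem_insert_self _ _))).smul _).add
        (ih fun m hm => h m (Finset.mem_insert_of_mem hm))
  simp only [MvPolynomial.eval_eq]
  apply hsum
  intro m hm
  exact (MvPolynomial.le_totalDegree hm).trans hP

lemma hc_gauss_int (k : ℕ) : Integrable (fun x : ℝ => x ^ k) (ProbabilityTheory.gaussianReal 0 1) := by
  have h := (ProbabilityTheory.memLp_id_gaussianReal (μ := 0) (v := 1) k).integrable_norm_pow'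
  refine h.mono' (by fun_prop) (Filter.Eventually.of_forall fun x => ?_)
  simp

lemma hc_gauss_int' (k : ℕ) :
    Integrable (fun x : ℝ => x ^ k * ProbabilityTheory.gaussianPDFReal 0 1 x) := by
  have h := hc_gauss_int k
  rw [ProbabilityTheory.gaussianReal_of_var_ne_zero 0 one_ne_zero] at h
  unfold ProbabilityTheory.gaussianPDF at h
  rw [integrable_withDensity_iff (by fun_prop) (by simp)] at h
  refine h.congr (Filter.Eventually.of_forall fun x => ?_)
  simp only
  rw [ENNReal.toReal_ofReal (ProbabilityTheory.gaussianPDFReal_nonneg _ _ _)]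

lemma hc_gauss_rec (k : ℕ) : ∫ x, x ^ (k + 1) ∂(ProbabilityTheory.gaussianReal 0 1) =
    k * ∫ x, x ^ (k - 1) ∂(ProbabilityTheory.gaussianReal 0 1) := by
  rw [ProbabilityTheory.integral_gaussianReal_eq_integral_smul one_ne_zero,
    ProbabilityTheory.integral_gaussianReal_eq_integral_smul one_ne_zero]
  have hd : ∀ x : ℝ, HasDerivAt (ProbabilityTheory.gaussianPDFReal 0 1)
      (- (x * ProbabilityTheory.gaussianPDFReal 0 1 x)) x := by
    intro x
    rw [ProbabilityTheory.gaussianPDFReal_def]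
    have h1 : HasDerivAt (fun y : ℝ => -(y - 0) ^ 2 / (2 * ((1:NNReal):ℝ))) (-x) x := by
      have := ((((hasDerivAt_id x).sub_const 0).pow 2).neg).div_const (2 * ((1:NNReal):ℝ))
      refine this.congr_deriv ?_
      norm_num
      try ring
    have h2 := (h1.exp).const_mul ((√(2 * Real.pi * ((1:NNReal):ℝ)))⁻¹)
    refine h2.congr_deriv ?_
    ring
  have hu : ∀ x : ℝ, HasDerivAt (fun x : ℝ => x ^ k) (k * x ^ (k - 1)) x := fun x => hasDerivAt_pow k x
  have := integral_mul_deriv_eq_deriv_mul_of_integrable (u := fun x : ℝ => x ^ k)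
    (v := ProbabilityTheory.gaussianPDFReal 0 1)
    (u' := fun x => k * x ^ (k - 1)) (v' := fun x => - (x * ProbabilityTheory.gaussianPDFReal 0 1 x))
    (fun x _ => hu x) (fun x _ => hd x)
    (by
      refine (hc_gauss_int' (k + 1)).neg.congr (Filter.Eventually.of_forall fun x => ?_)
      simp; ring)
    (by
      refine ((hc_gauss_int' (k - 1)).const_mul (k:ℝ)).congr (Filter.Eventually.of_forall fun x => ?_)
      simp; ring)
    (hc_gauss_int' k)
  rw [← integral_const_mul]
  have e1 : ∀ x : ℝ, x ^ k * -(x * ProbabilityTheory.gaussianPDFReal 0 1 x) =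
    - (ProbabilityTheory.gaussianPDFReal 0 1 x • x ^ (k + 1)) := by
    intro x; simp only [smul_eq_mul]; ring
  simp only [e1] at this
  rw [integral_neg, neg_inj] at this
  rw [this]
  congr 1; funext x; simp only [smul_eq_mul]; ring

/-- one step averaging operator -/
def HcT (c : ℝ) (φ : ℝ → ℝ) : ℝ → ℝ := fun x => (φ (x + c) + φ (x - c)) / 2

def HcD (c : ℝ) (φ : ℝ → ℝ) : ℝ → ℝ := fun x => (φ (x + c) - φ (x - c)) / 2

lemma HcT_D (c : ℝ) (φ : ℝ → ℝ) : HcT c (HcD c φ) = HcD c (HcT c φ) := by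
  funext x; simp only [HcT, HcD]
  rw [show x + c - c = x - c + c by ring]
  ring

lemma HcT_iter_X (c : ℝ) (M : ℕ) (φ : ℝ → ℝ) (y : ℝ) :
    ((HcT c)^[M + 1] (fun x => x * φ x)) y =
      y * ((HcT c)^[M + 1] φ) y + (M + 1) * c * ((HcT c)^[M] (HcD c φ)) y := by
  induction M generalizing y with
  | zero => simp [HcT, HcD]; ring
  | succ M ih =>
    rw [Function.iterate_succ_apply', Function.iterate_succ_apply' _ (M + 1) φ,
      Function.iterate_succ_apply' _ M (HcD c φ)]
    have hcomm : (HcT c)^[M + 1] (HcD c φ) = HcD c ((HcT c)^[M + 1] φ) := by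
      have : Function.Commute (HcT c) (HcD c) := fun φ => HcT_D c φ
      exact (this.iterate_left (M + 1)) φ
    rw [← Function.iterate_succ_apply' (HcT c) M (HcD c φ), hcomm]
    have e : HcT c ((HcT c)^[M + 1] fun x => x * φ x) y =
      HcT c (fun y => y * ((HcT c)^[M + 1] φ) y + (M + 1) * c * ((HcT c)^[M] (HcD c φ)) y) y := by
      simp only [HcT]; rw [ih, ih]
    rw [e]
    have e2 : HcT c ((HcT c)^[M] (HcD c φ)) y = HcD c ((HcT c)^[M + 1] φ) y := by
      rw [← Function.iterate_succ_apply' (HcT c) M (HcD c φ), hcomm]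
    generalize (HcT c)^[M + 1] φ = ψ at *
    generalize (HcT c)^[M] (HcD c φ) = χ at *
    simp only [HcT, HcD] at e2 ⊢
    push_cast
    linear_combination ((M:ℝ) + 1) * c * e2

lemma HcT_iter_add (c : ℝ) (M : ℕ) (φ ψ : ℝ → ℝ) :
    (HcT c)^[M] (fun x => φ x + ψ x) = fun x => ((HcT c)^[M] φ) x + ((HcT c)^[M] ψ) x := by
  induction M generalizing φ ψ with
  | zero => rfl
  | succ M ih =>
    simp only [Function.iterate_succ_apply]
    rw [← ih]; congr 1; funext x; simp only [HcT]; ring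

lemma HcT_iter_smul (c : ℝ) (M : ℕ) (a : ℝ) (φ : ℝ → ℝ) :
    (HcT c)^[M] (fun x => a * φ x) = fun x => a * ((HcT c)^[M] φ) x := by
  induction M generalizing φ with
  | zero => rfl
  | succ M ih =>
    simp only [Function.iterate_succ_apply]
    rw [← ih]; congr 1; funext x; simp only [HcT]; ring

lemma HcT_iter_sum (c : ℝ) (M : ℕ) (s : Finset ℕ) (a : ℕ → ℝ) (φ : ℕ → ℝ → ℝ) :
    (HcT c)^[M] (fun x => ∑ j ∈ s, a j * φ j x) = fun x => ∑ j ∈ s, a j * ((HcT c)^[M] (φ j)) x := by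
  induction s using Finset.induction_on with
  | empty =>
    simp only [Finset.sum_empty]
    have := HcT_iter_smul c M 0 (fun _ => 0)
    simpa using this
  | insert k s hk ih =>
    simp only [Finset.sum_insert hk]
    rw [HcT_iter_add c M (fun x => a k * φ k x), ih, HcT_iter_smul]

lemma HcD_pow (c : ℝ) (k : ℕ) : HcD c (fun x => x ^ k) =
    fun x => ∑ j ∈ Finset.range (k + 1), (k.choose j * ((1 - (-1) ^ j) / 2) * c ^ j) * x ^ (k - j) := by
  funext x
  simp only [HcD]
  rw [add_comm x c, show x - c = -c + x by ring, add_pow, add_pow, ← Finset.sum_sub_distrib, Finset.sum_div]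
  apply Finset.sum_congr rfl
  intro j _
  rw [neg_pow c]; ring

lemma hc_moment (k : ℕ) : ∀ c : ℕ → ℝ, Filter.Tendsto c Filter.atTop (nhds 0) →
    Filter.Tendsto (fun M : ℕ => (M:ℝ) * c M ^ 2) Filter.atTop (nhds 1) →
    Filter.Tendsto (fun M : ℕ => ((HcT (c M))^[M] (fun x => x ^ k)) 0) Filter.atTop
      (nhds (∫ x, x ^ k ∂(ProbabilityTheory.gaussianReal 0 1))) := by
  induction k using Nat.strong_induction_on with
  | _ k ih =>
  intro c hc hMc
  cases k with
  | zero =>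
    have : ∀ (c : ℝ) (M : ℕ), (HcT c)^[M] (fun _ => (1:ℝ)) = fun _ => 1 := by
      intro c M
      induction M with
      | zero => rfl
      | succ M ih => rw [Function.iterate_succ_apply', ih]; funext x; simp [HcT]
    simp [this]
  | succ k =>
    rw [← Filter.tendsto_add_atTop_iff_nat 1]
    have hc' : Filter.Tendsto (fun M => c (M + 1)) Filter.atTop (nhds 0) :=
      (Filter.tendsto_add_atTop_iff_nat 1).2 hc
    have hMc1 : Filter.Tendsto (fun M : ℕ => ((M:ℝ) + 1) * c (M + 1) ^ 2) Filter.atTop (nhds 1) := by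
      have := (Filter.tendsto_add_atTop_iff_nat 1).2 hMc
      simpa using this
    have hMc2 : Filter.Tendsto (fun M : ℕ => (M:ℝ) * c (M + 1) ^ 2) Filter.atTop (nhds 1) := by
      have := hMc1.sub (hc'.pow 2)
      simp only [ne_eq, OfNat.ofNat_ne_zero, not_false_eq_true, zero_pow, sub_zero] at this
      refine this.congr fun M => ?_
      ring
    have e : ∀ M : ℕ, ((HcT (c (M + 1)))^[M + 1] (fun x => x ^ (k + 1))) 0 =
        ∑ j ∈ Finset.range (k + 1), (k.choose j * ((1 - (-1) ^ j) / 2)) *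
          ((((M:ℝ) + 1) * c (M + 1) ^ (j + 1)) * ((HcT (c (M + 1)))^[M] (fun x => x ^ (k - j))) 0) := by
      intro M
      have e1 : (fun x : ℝ => x ^ (k + 1)) = fun x => x * x ^ k := by funext x; ring
      rw [e1, HcT_iter_X, HcD_pow, HcT_iter_sum]
      simp only [zero_mul, zero_add]
      rw [Finset.mul_sum]
      apply Finset.sum_congr rfl
      intro j _
      ring
    simp only [e]
    rw [hc_gauss_rec]
    have hlim : ∀ j ∈ Finset.range (k + 1), Filter.Tendsto (fun M : ℕ =>
        ((k.choose j : ℝ) * ((1 - (-1) ^ j) / 2)) *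
          ((((M:ℝ) + 1) * c (M + 1) ^ (j + 1)) * ((HcT (c (M + 1)))^[M] (fun x => x ^ (k - j))) 0))
        Filter.atTop (nhds (if j = 1 then k * ∫ x, x ^ (k - 1) ∂(ProbabilityTheory.gaussianReal 0 1) else 0)) := by
      intro j hj
      rcases Nat.lt_trichotomy j 1 with h | h | h
      · have : j = 0 := by omega
        subst this; simp
      · subst h
        have h1 := ih (k - 1) (by omega) (fun M => c (M + 1)) hc' hMc2
        have := (hMc1.mul h1).const_mul ((k.choose 1 : ℝ) * ((1 - (-1) ^ 1) / 2))
        convert this using 2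
        simp
      · rw [if_neg (by omega)]
        have h1 := ih (k - j) (by omega) (fun M => c (M + 1)) hc' hMc2
        have h2 : Filter.Tendsto (fun M : ℕ => ((M:ℝ) + 1) * c (M + 1) ^ (j + 1)) Filter.atTop (nhds 0) := by
          have := hMc1.mul (hc'.pow (j - 1))
          rw [zero_pow (by omega), mul_zero] at this
          refine this.congr fun M => ?_
          rw [mul_assoc, ← pow_add]; congr 2; omega
        have := (h2.mul h1).const_mul ((k.choose j : ℝ) * ((1 - (-1) ^ j) / 2))
        simpa using this
    have := tendsto_finsetSum _ hlim
    rw [Finset.sum_ite_eq'] at this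
    convert this using 2
    split_ifs with h
    · rfl
    · have : k = 0 := by simp at h; omega
      subst this; simp

lemma HcEx_prod_step {N : ℕ} (i : Fin N) (c : ℝ) (φ : Fin N → ℝ → ℝ)
    (l : List (EuclideanSpace ℝ (Fin N))) :
    HcEx (EuclideanSpace.single i c :: l) (fun x => ∏ j, φ j (x j)) =
      HcEx l (fun x => ∏ j, (Function.update φ i (HcT c (φ i))) j (x j)) := by
  simp only [HcEx]
  congr 1
  funext x
  rw [← Finset.mul_prod_erase _ _ (Finset.mem_univ i), ← Finset.mul_prod_erase _ _ (Finset.mem_univ i),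
    ← Finset.mul_prod_erase _ _ (Finset.mem_univ i)]
  have h1 : ∏ j ∈ Finset.univ.erase i, φ j ((x + EuclideanSpace.single i c) j) =
      ∏ j ∈ Finset.univ.erase i, φ j (x j) := by
    apply Finset.prod_congr rfl
    intro j hj
    simp [Finset.ne_of_mem_erase hj]
  have h2 : ∏ j ∈ Finset.univ.erase i, φ j ((x - EuclideanSpace.single i c) j) =
      ∏ j ∈ Finset.univ.erase i, φ j (x j) := by
    apply Finset.prod_congr rfl
    intro j hj
    simp [Finset.ne_of_mem_erase hj]
  have h3 : ∏ j ∈ Finset.univ.erase i, (Function.update φ i (HcT c (φ i))) j (x j) =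
      ∏ j ∈ Finset.univ.erase i, φ j (x j) := by
    apply Finset.prod_congr rfl
    intro j hj
    simp [Finset.ne_of_mem_erase hj]
  rw [h1, h2, h3]
  simp [HcT]
  ring

lemma HcEx_prod_replicate {N : ℕ} (i : Fin N) (c : ℝ) (M : ℕ) (φ : Fin N → ℝ → ℝ)
    (l : List (EuclideanSpace ℝ (Fin N))) :
    HcEx (List.replicate M (EuclideanSpace.single i c) ++ l) (fun x => ∏ j, φ j (x j)) =
      HcEx l (fun x => ∏ j, (Function.update φ i ((HcT c)^[M] (φ i))) j (x j)) := by
  induction M generalizing φ with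
  | zero => simp
  | succ M ih =>
    rw [List.replicate_succ, List.cons_append, HcEx_prod_step, ih]
    simp [Function.iterate_succ_apply]

lemma HcEx_prod_flatMap {N : ℕ} (c : ℝ) (M : ℕ) (js : List (Fin N)) (hjs : js.Nodup) (φ : Fin N → ℝ → ℝ) :
    HcEx (js.flatMap fun i => List.replicate M (EuclideanSpace.single i c)) (fun x => ∏ j, φ j (x j)) =
      ∏ j, (if j ∈ js then (HcT c)^[M] (φ j) else φ j) 0 := by
  induction js generalizing φ with
  | nil => simp [HcEx]
  | cons i js ih =>
    rw [List.flatMap_cons, HcEx_prod_replicate, ih (List.nodup_cons.1 hjs).2]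
    apply Finset.prod_congr rfl
    intro j _
    have hi := (List.nodup_cons.1 hjs).1
    by_cases hj : j = i
    · subst hj; simp [hi]
    · simp [hj]

/-- the vectors `e_i / √M`, each repeated `M` times -/
def HcL (N M : ℕ) : List (EuclideanSpace ℝ (Fin N)) :=
  (List.finRange N).flatMap fun i => List.replicate M (EuclideanSpace.single i ((√(M:ℝ))⁻¹))

lemma HcL_prod (N M : ℕ) (φ : Fin N → ℝ → ℝ) :
    HcEx (HcL N M) (fun x => ∏ j, φ j (x j)) = ∏ j, ((HcT (√(M:ℝ))⁻¹)^[M] (φ j)) 0 := by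
  rw [HcL, HcEx_prod_flatMap _ _ _ (List.nodup_finRange N)]
  simp

lemma hc_moment' (k : ℕ) :
    Filter.Tendsto (fun M : ℕ => ((HcT ((√(M:ℝ))⁻¹))^[M] (fun x => x ^ k)) 0) Filter.atTop
      (nhds (∫ x, x ^ k ∂(ProbabilityTheory.gaussianReal 0 1))) := by
  apply hc_moment k (fun M => (√(M:ℝ))⁻¹)
  · exact (Real.tendsto_sqrt_atTop.comp tendsto_natCast_atTop_atTop).inv_tendsto_atTop
  · apply tendsto_const_nhds.congr'
    filter_upwards [Filter.eventually_gt_atTop 0] with M hM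
    have : (0:ℝ) < M := by exact_mod_cast hM
    rw [inv_pow, Real.sq_sqrt this.le, mul_inv_cancel₀ this.ne']

lemma hc_conv {N : ℕ} (Q : MvPolynomial (Fin N) ℝ) :
    Integrable (fun x : EuclideanSpace ℝ (Fin N) => MvPolynomial.eval (fun i => x i) Q)
        (ProbabilityTheory.stdGaussian (EuclideanSpace ℝ (Fin N))) ∧
    Filter.Tendsto (fun M : ℕ => HcEx (HcL N M) (fun x => MvPolynomial.eval (fun i => x i) Q)) Filter.atTop
      (nhds (∫ x, MvPolynomial.eval (fun i => x i) Q
        ∂(ProbabilityTheory.stdGaussian (EuclideanSpace ℝ (Fin N))))) := by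
  induction Q using MvPolynomial.induction_on' with
  | monomial m a =>
    have e : ∀ x : EuclideanSpace ℝ (Fin N), MvPolynomial.eval (fun i => x i) (MvPolynomial.monomial m a) =
        a * ∏ i, x i ^ m i := by
      intro x
      rw [MvPolynomial.eval_monomial, Finsupp.prod_fintype _ _ (by simp)]
    simp only [e]
    have hm : Measurable (fun x : EuclideanSpace ℝ (Fin N) => ∏ i, x i ^ m i) := by fun_prop
    constructor
    · apply Integrable.const_mul
      rw [← ProbabilityTheory.map_pi_eq_stdGaussian, integrable_map_measure hm.aestronglyMeasurable (by fun_prop)]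
      exact Integrable.fintype_prod (f := fun i (x:ℝ) => x ^ m i) fun i => hc_gauss_int (m i)
    · simp only [HcEx_smul, integral_const_mul]
      apply Filter.Tendsto.const_mul
      rw [← ProbabilityTheory.map_pi_eq_stdGaussian, integral_map (by fun_prop) hm.aestronglyMeasurable]
      have := integral_fintype_prod_eq_prod (𝕜 := ℝ) (fun (i : Fin N) (x : ℝ) => x ^ m i)
        (μ := fun _ => ProbabilityTheory.gaussianReal 0 1)
      simp only [this]
      have e2 : ∀ M, HcEx (HcL N M) (fun x => ∏ i, x i ^ m i) =
        ∏ j, ((HcT (√(M:ℝ))⁻¹)^[M] (fun x => x ^ m j)) 0 := fun M => HcL_prod N M (fun j x => x ^ m j)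
      simp only [e2]
      exact tendsto_finset_prod _ fun i _ => hc_moment' (m i)
  | add p q hp hq =>
    simp only [map_add]
    refine ⟨hp.1.add hq.1, ?_⟩
    rw [integral_add hp.1 hq.1]
    simp only [HcEx_add]
    exact hp.2.add hq.2

lemma hc_comp_poly {N : ℕ} (Q : MvPolynomial (Fin N) ℝ)
    (U : EuclideanSpace ℝ (Fin N) ≃ₗᵢ[ℝ] EuclideanSpace ℝ (Fin N)) :
    ∃ Q' : MvPolynomial (Fin N) ℝ, ∀ x : EuclideanSpace ℝ (Fin N),
      MvPolynomial.eval (fun i => x i) Q' = MvPolynomial.eval (fun i => (U x) i) Q := by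
  refine ⟨MvPolynomial.bind₁ (fun i => ∑ j, MvPolynomial.C ((U (EuclideanSpace.single j 1)) i) * MvPolynomial.X j) Q, ?_⟩
  intro x
  rw [MvPolynomial.eval, MvPolynomial.eval₂Hom_bind₁]
  congr 2
  funext i
  have hx : x = ∑ j, x j • (EuclideanSpace.single j (1:ℝ)) := by
    ext k; simp [Finset.sum_apply, Pi.single_apply]
  conv_rhs => rw [hx, map_sum]
  simp [mul_comm]

/-- asymptotic rotation invariance -/
lemma hc_conv_rot {N : ℕ} (Q : MvPolynomial (Fin N) ℝ)
    (U : EuclideanSpace ℝ (Fin N) ≃ₗᵢ[ℝ] EuclideanSpace ℝ (Fin N)) :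
    Filter.Tendsto (fun M : ℕ => HcEx (HcL N M) (fun x => MvPolynomial.eval (fun i => (U x) i) Q)) Filter.atTop
      (nhds (∫ x, MvPolynomial.eval (fun i => x i) Q
        ∂(ProbabilityTheory.stdGaussian (EuclideanSpace ℝ (Fin N))))) := by
  obtain ⟨Q', hQ'⟩ := hc_comp_poly Q U
  have h := (hc_conv Q').2
  simp only [hQ'] at h
  convert h using 2
  conv_lhs => rw [← ProbabilityTheory.stdGaussian_map U]
  rw [integral_map (by fun_prop)]
  have : Continuous (fun x : EuclideanSpace ℝ (Fin N) => MvPolynomial.eval (fun i => x i) Q) :=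
    (MvPolynomial.continuous_eval Q).comp (by fun_prop)
  exact this.aestronglyMeasurable

lemma hc_trans {n : ℕ} (x y : EuclideanSpace ℝ (Fin (n + 1))) (h : ‖x‖ = ‖y‖) :
    ∃ U : EuclideanSpace ℝ (Fin (n + 1)) ≃ₗᵢ[ℝ] EuclideanSpace ℝ (Fin (n + 1)), U x = y :=
  ⟨(ℝ ∙ (x - y))ᗮ.reflection, Submodule.reflection_sub h⟩

abbrev HcE (n : ℕ) := EuclideanSpace ℝ (Fin (n + 1))

abbrev HcG (n : ℕ) := unitary (HcE n →L[ℝ] HcE n)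

instance hcStar (n : ℕ) : ContinuousStar (HcE n →L[ℝ] HcE n) :=
  ⟨(ContinuousLinearMap.adjoint (𝕜 := ℝ) (E := HcE n) (F := HcE n)).continuous⟩

instance hcTopGroup (n : ℕ) : IsTopologicalGroup (HcG n) := inferInstance

instance hcCompact (n : ℕ) : CompactSpace (HcG n) := by
  have : ProperSpace (HcE n →L[ℝ] HcE n) := FiniteDimensional.proper ℝ _
  have h : IsCompact ((unitary (HcE n →L[ℝ] HcE n) : Set (HcE n →L[ℝ] HcE n))) := by
    refine Metric.isCompact_of_isClosed_isBounded isClosed_unitary ?_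
    refine (Metric.isBounded_closedBall (x := (0 : HcE n →L[ℝ] HcE n)) (r := 1)).subset ?_
    intro u hu
    rw [mem_closedBall_zero_iff]
    exact (CStarRing.norm_of_mem_unitary hu).le
  exact isCompact_iff_compactSpace.1 h

lemma hc_avg_core {n : ℕ}
    (μ : Measure (Metric.sphere (0 : HcE n) 1)) [IsProbabilityMeasure μ]
    (hinv : ∀ U : HcE n ≃ₗᵢ[ℝ] HcE n,
      ∀ f : HcE n → ℝ, Continuous f → ∫ ξ, f (U ξ.1) ∂μ = ∫ ξ, f ξ.1 ∂μ)
    {G : Type} [Group G] [TopologicalSpace G] [IsTopologicalGroup G] [CompactSpace G]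
    [MeasurableSpace G] [BorelSpace G] (κ : Measure G) [IsProbabilityMeasure κ] [κ.IsMulLeftInvariant]
    (S : G →* (HcE n ≃ₗᵢ[ℝ] HcE n)) (hS : Continuous (fun p : G × HcE n => S p.1 p.2))
    (hsurj : Function.Surjective S) (f : HcE n → ℝ) (hf : Continuous f) (x : HcE n) :
    ∫ g, f (S g⁻¹ x) ∂κ = ∫ ξ, f (‖x‖ • ξ.1) ∂μ := by
  have hcont2 : Continuous (fun p : G × HcE n => S p.1⁻¹ p.2) :=
    hS.comp (Continuous.prodMk (continuous_inv.comp continuous_fst) continuous_snd)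
  have hK : ∀ y : HcE n, ‖x‖ = ‖y‖ → ∫ g, f (S g⁻¹ x) ∂κ = ∫ g, f (S g⁻¹ y) ∂κ := by
    intro y hxy
    obtain ⟨U, hU⟩ := hc_trans x y hxy
    obtain ⟨h, rfl⟩ := hsurj U
    have := integral_mul_left_eq_self (μ := κ) (fun g => f (S g⁻¹ x)) h⁻¹
    rw [← this]
    congr 1; funext g
    rw [mul_inv_rev, inv_inv, map_mul]
    show f (S g⁻¹ (S h x)) = _
    rw [hU]
  have h1 : ∫ g, f (S g⁻¹ x) ∂κ = ∫ ξ : Metric.sphere (0 : HcE n) 1, ∫ g, f (S g⁻¹ (‖x‖ • ξ.1)) ∂κ ∂μ := by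
    have : ∀ ξ : Metric.sphere (0 : HcE n) 1, ∫ g, f (S g⁻¹ (‖x‖ • ξ.1)) ∂κ = ∫ g, f (S g⁻¹ x) ∂κ := by
      intro ξ
      refine (hK _ ?_).symm
      rw [norm_smul, norm_norm, mem_sphere_zero_iff_norm.1 ξ.2, mul_one]
    simp only [this, integral_const, probReal_univ, one_smul]
  rw [h1, integral_integral_swap_of_hasCompactSupport]
  · have : ∀ g, ∫ ξ : Metric.sphere (0 : HcE n) 1, f (S g⁻¹ (‖x‖ • ξ.1)) ∂μ =
        ∫ ξ : Metric.sphere (0 : HcE n) 1, f (‖x‖ • ξ.1) ∂μ := by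
      intro g
      rw [← hinv (S g⁻¹) (fun y => f (‖x‖ • y)) (by fun_prop)]
      simp
    simp only [this, integral_const, probReal_univ, one_smul]
  · have : Continuous (fun p : (Metric.sphere (0 : HcE n) 1) × G => S p.2⁻¹ (‖x‖ • p.1.1)) :=
      hcont2.comp (f := fun p : (Metric.sphere (0 : HcE n) 1) × G => (p.2, ‖x‖ • p.1.1))
        (Continuous.prodMk continuous_snd (by fun_prop))
    exact hf.comp this
  · exact HasCompactSupport.of_compactSpace _

lemma hc_cont (n : ℕ) : Continuous (fun p : (HcG n) × HcE n => Unitary.linearIsometryEquiv p.1 p.2) := by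
  have : Continuous (fun p : (HcG n) × (HcE n) => (p.1.1 : HcE n →L[ℝ] HcE n)) :=
      continuous_subtype_val.comp continuous_fst
  exact this.clm_apply continuous_snd

lemma hc_avg {n : ℕ}
    (μ : Measure (Metric.sphere (0 : HcE n) 1)) [IsProbabilityMeasure μ]
    (hinv : ∀ U : HcE n ≃ₗᵢ[ℝ] HcE n,
      ∀ f : HcE n → ℝ, Continuous f → ∫ ξ, f (U ξ.1) ∂μ = ∫ ξ, f ξ.1 ∂μ) :
    ∃ (G : Type) (mG : MeasurableSpace G) (κ : Measure G) (_ : IsProbabilityMeasure κ)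
      (R : G → HcE n ≃ₗᵢ[ℝ] HcE n),
      (∀ x, Measurable (fun g => R g x)) ∧
      ∀ f : HcE n → ℝ, Continuous f → ∀ x,
        ∫ g, f (R g x) ∂κ = ∫ ξ, f (‖x‖ • ξ.1) ∂μ := by
  let mG : MeasurableSpace (HcG n) := borel (HcG n)
  have hB : BorelSpace (HcG n) := ⟨rfl⟩
  have hκ : IsProbabilityMeasure (Measure.haarMeasure (⊤ : TopologicalSpace.PositiveCompacts (HcG n))) := ⟨by
    have := Measure.haarMeasure_self (K₀ := (⊤ : TopologicalSpace.PositiveCompacts (HcG n)))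
    simpa using this⟩
  refine ⟨HcG n, mG, Measure.haarMeasure ⊤, hκ, fun g => Unitary.linearIsometryEquiv g⁻¹, ?_, ?_⟩
  · intro x
    have : Continuous (fun g : HcG n => Unitary.linearIsometryEquiv g⁻¹ x) :=
      (hc_cont n).comp (f := fun g : HcG n => (g⁻¹, x)) (Continuous.prodMk continuous_inv continuous_const)
    exact this.measurable
  · intro f hf x
    exact hc_avg_core μ hinv (Measure.haarMeasure ⊤) (Unitary.linearIsometryEquiv.toMonoidHom)
      (hc_cont n) (Unitary.linearIsometryEquiv (𝕜 := ℝ) (H := HcE n)).surjective f hf x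

lemma HcEx_jensen {E : Type*} [AddCommGroup E] (p : ℝ) (hp : 1 ≤ p) (l : List E) (F : E → ℝ)
    (hF : ∀ x, 0 ≤ F x) : (HcEx l F) ^ p ≤ HcEx l (fun x => F x ^ p) := by
  induction l generalizing F with
  | nil => simp [HcEx]
  | cons v l ih =>
    simp only [HcEx]
    refine (ih (fun x => (F (x + v) + F (x - v)) / 2)
      (fun x => by have := hF (x + v); have := hF (x - v); positivity)).trans ?_
    apply HcEx_mono
    intro x
    have := (convexOn_rpow hp).2 (Set.mem_Ici.2 (hF (x + v))) (Set.mem_Ici.2 (hF (x - v)))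
      (by norm_num : (0:ℝ) ≤ 1/2) (by norm_num : (0:ℝ) ≤ 1/2) (by norm_num)
    simp only [smul_eq_mul] at this
    calc _ = (1 / 2 * F (x + v) + 1 / 2 * F (x - v)) ^ p := by congr 1; ring
      _ ≤ _ := this
      _ = _ := by ring

lemma HcEx_integral {E : Type*} [AddCommGroup E] {G : Type*} [MeasurableSpace G] (κ : Measure G)
    (l : List E) (F : G → E → ℝ) (hF : ∀ x, Integrable (fun g => F g x) κ) :
    Integrable (fun g => HcEx l (F g)) κ ∧
    ∫ g, HcEx l (F g) ∂κ = HcEx l (fun x => ∫ g, F g x ∂κ) := by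
  induction l generalizing F with
  | nil => simpa [HcEx] using hF _
  | cons v l ih =>
    simp only [HcEx]
    have := ih (fun g x => (F g (x + v) + F g (x - v)) / 2)
      (fun x => ((hF _).add (hF _)).div_const 2)
    refine ⟨this.1, this.2.trans ?_⟩
    congr 1; funext x
    rw [integral_div, integral_add (hF _) (hF _)]

lemma HcEx_normsq {E : Type*} [NormedAddCommGroup E] [InnerProductSpace ℝ E] (l : List E) :
    HcEx l (fun x => ‖x‖ ^ 2) = (l.map (fun v => ‖v‖ ^ 2)).sum := by
  have key : ∀ c : ℝ, HcEx l (fun x => ‖x‖ ^ 2 + c) = (l.map (fun v => ‖v‖ ^ 2)).sum + c := by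
    induction l with
    | nil => intro c; simp [HcEx]
    | cons v l ih =>
      intro c
      simp only [HcEx]
      have : (fun x : E => (‖x + v‖ ^ 2 + c + (‖x - v‖ ^ 2 + c)) / 2) = fun x => ‖x‖ ^ 2 + (‖v‖ ^ 2 + c) := by
        funext x
        have := parallelogram_law_with_norm ℝ x v
        nlinarith
      rw [this, ih]
      simp; ring
  simpa using key 0

lemma HcL_normsq (N M : ℕ) (hM : 0 < M) : HcEx (HcL N M) (fun x => ‖x‖ ^ 2) = N := by
  rw [HcEx_normsq, HcL, List.map_flatMap, List.flatMap_def, List.sum_flatten, List.map_map]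
  have : (M:ℝ) ≠ 0 := by positivity
  simp [Function.comp_def, this]

lemma HcL_norm_pow (N M d : ℕ) (hN : 0 < N) (hM : 0 < M) :
    1 ≤ HcEx (HcL N M) (fun x => ‖x‖ ^ (2 * d)) := by
  have h : HcEx (HcL N M) (fun x => (1 - (d:ℝ)) + d * ‖x‖ ^ 2) ≤ HcEx (HcL N M) (fun x => ‖x‖ ^ (2 * d)) := by
    apply HcEx_mono
    intro x
    have := one_add_mul_le_pow (a := ‖x‖ ^ 2 - 1) (by nlinarith [sq_nonneg ‖x‖]) d
    rw [pow_mul]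
    calc _ = 1 + (d:ℝ) * (‖x‖ ^ 2 - 1) := by ring
      _ ≤ _ := this
      _ = _ := by ring
  rw [HcEx_add, HcEx_const, HcEx_smul, HcL_normsq N M hM] at h
  have hN' : (1:ℝ) ≤ N := by exact_mod_cast hN
  nlinarith [(Nat.cast_nonneg d : (0:ℝ) ≤ d)]

lemma hc_hom_eval {N d : ℕ} (P : MvPolynomial (Fin N) ℝ) (hP : P.IsHomogeneous d) (r : ℝ)
    (x : Fin N → ℝ) :
    MvPolynomial.eval (fun i => r * x i) P = r ^ d * MvPolynomial.eval x P := by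
  rw [MvPolynomial.eval_eq', MvPolynomial.eval_eq', Finset.mul_sum]
  apply Finset.sum_congr rfl
  intro m hm
  have h := hP (MvPolynomial.mem_support_iff.1 hm)
  rw [Finsupp.weight_apply, Finsupp.sum_fintype _ _ (by simp)] at h
  simp only [Pi.one_apply, smul_eq_mul, mul_one] at h
  simp only [mul_pow, Finset.prod_mul_distrib, Finset.prod_pow_eq_pow_sum]
  rw [h]; ring

lemma hc_cont_eval {N : ℕ} (P : MvPolynomial (Fin N) ℝ) :
    Continuous (fun x : EuclideanSpace ℝ (Fin N) => MvPolynomial.eval (fun i => x i) P) :=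
  (MvPolynomial.continuous_eval P).comp (by fun_prop)

lemma hc_norm_conv (N d : ℕ) (hN : 0 < N) : ∃ c : ℝ, 1 ≤ c ∧
    Filter.Tendsto (fun M : ℕ => HcEx (HcL N M) (fun x => ‖x‖ ^ (2 * d))) Filter.atTop (nhds c) := by
  have h := (hc_conv ((∑ i, MvPolynomial.X i ^ 2 : MvPolynomial (Fin N) ℝ) ^ d)).2
  have e : (fun x : EuclideanSpace ℝ (Fin N) =>
      MvPolynomial.eval (fun i => x i) ((∑ i, MvPolynomial.X i ^ 2 : MvPolynomial (Fin N) ℝ) ^ d)) =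
      fun x => ‖x‖ ^ (2 * d) := by
    funext x
    rw [pow_mul, EuclideanSpace.norm_sq_eq]
    simp
  rw [e] at h
  refine ⟨_, ?_, h⟩
  apply ge_of_tendsto h
  filter_upwards [Filter.eventually_gt_atTop 0] with M hM
  exact HcL_norm_pow N M d hN hM

lemma hc_bound {n d : ℕ} (P : MvPolynomial (Fin (n+1)) ℝ) (hP : P.IsHomogeneous d) :
    ∃ C : ℝ, 0 ≤ C ∧ ∀ x : HcE n, |MvPolynomial.eval (fun i => x i) P| ≤ C * ‖x‖ ^ d := by
  obtain ⟨C, hC⟩ := (isCompact_closedBall (0 : HcE n) 1).exists_bound_of_continuousOn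
    (hc_cont_eval P).continuousOn
  have hC0 : 0 ≤ C := (norm_nonneg _).trans (hC 0 (by simp))
  refine ⟨C, hC0, fun x => ?_⟩
  have hu : ∃ u : HcE n, ‖u‖ ≤ 1 ∧ x = ‖x‖ • u := by
    by_cases hx : x = 0
    · exact ⟨0, by simp, by simp [hx]⟩
    · exact ⟨‖x‖⁻¹ • x, by rw [norm_smul, norm_inv, norm_norm, inv_mul_cancel₀ (norm_ne_zero_iff.2 hx)],
        by rw [smul_inv_smul₀ (norm_ne_zero_iff.2 hx)]⟩
  obtain ⟨u, hu1, hu⟩ := hu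
  have : MvPolynomial.eval (fun i => x i) P = ‖x‖ ^ d * MvPolynomial.eval (fun i => u i) P := by
    rw [← hc_hom_eval P hP]
    congr 2; funext i
    conv_lhs => rw [hu]
    simp
  rw [this, abs_mul, abs_of_nonneg (by positivity), mul_comm]
  gcongr
  exact hC u (by simpa using hu1)

lemma hc_hom {n d : ℕ}
    (μ : Measure (Metric.sphere (0 : HcE n) 1)) [IsProbabilityMeasure μ]
    (hinv : ∀ U : HcE n ≃ₗᵢ[ℝ] HcE n,
      ∀ f : HcE n → ℝ, Continuous f → ∫ ξ, f (U ξ.1) ∂μ = ∫ ξ, f ξ.1 ∂μ)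
    (P : MvPolynomial (Fin (n+1)) ℝ) (hP : P.IsHomogeneous d) (q : ℝ) (hq : 2 ≤ q) :
    (∫ ξ, |MvPolynomial.eval (fun i => ξ.1 i) P| ^ q ∂μ) ^ (2 / q) ≤
      (q - 1) ^ d * ∫ ξ, (MvPolynomial.eval (fun i => ξ.1 i) P) ^ 2 ∂μ := by
  obtain ⟨G, mG, κ, hκ, R, hRm, hR⟩ := hc_avg μ hinv
  obtain ⟨C, hC0, hC⟩ := hc_bound P hP
  obtain ⟨c, hc1, hc⟩ := hc_norm_conv (n+1) d (Nat.succ_pos n)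
  have hpc := hc_cont_eval P
  have hph : ∀ (r : ℝ) (x : HcE n), MvPolynomial.eval (fun i => (r • x) i) P =
      r ^ d * MvPolynomial.eval (fun i => x i) P := by
    intro r x
    rw [← hc_hom_eval P hP]
    congr 2
  have hdeg : HcDeg d (fun x : HcE n => MvPolynomial.eval (fun i => x i) P) :=
    HcDeg_eval P hP.totalDegree_le
  have hlim : ∀ U : HcE n ≃ₗᵢ[ℝ] HcE n, Filter.Tendsto (fun M : ℕ => HcEx (HcL (n+1) M)
      (fun x => (MvPolynomial.eval (fun i => (U x) i) P) ^ 2)) Filter.atTop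
      (nhds (∫ x, MvPolynomial.eval (fun i => x i) (P ^ 2)
        ∂(ProbabilityTheory.stdGaussian (HcE n)))) := by
    intro U
    have := hc_conv_rot (P ^ 2) U
    simpa only [map_pow] using this
  generalize (∫ x, MvPolynomial.eval (fun i => x i) (P ^ 2)
        ∂(ProbabilityTheory.stdGaussian (HcE n))) = ℓ at hlim
  generalize hp : (fun x : HcE n => MvPolynomial.eval (fun i => x i) P) = p at *
  have hpx : ∀ x : HcE n, MvPolynomial.eval (fun i => x i) P = p x := fun x => by rw [← hp]
  simp only [hpx] at *
  have hq0 : 0 < q := by linarith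
  set A := ∫ ξ : Metric.sphere (0 : HcE n) 1, |p ξ.1| ^ q ∂μ with hA
  set B := ∫ ξ : Metric.sphere (0 : HcE n) 1, (p ξ.1) ^ 2 ∂μ with hB
  have hA0 : 0 ≤ A := integral_nonneg fun _ => by positivity
  have hB0 : 0 ≤ B := integral_nonneg fun _ => by positivity
  set X : ℕ → ℝ := fun M => HcEx (HcL (n+1) M) (fun x => ‖x‖ ^ (2 * d)) with hX
  set Y : ℕ → G → ℝ := fun M g => HcEx (HcL (n+1) M) (fun x => (p (R g x)) ^ 2) with hY
  have hint : ∀ f : HcE n → ℝ, Continuous f → ∀ x, Integrable (fun g => f (R g x)) κ := by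
    intro f hf x
    obtain ⟨D, hD⟩ := (isCompact_closedBall (0 : HcE n) ‖x‖).exists_bound_of_continuousOn hf.continuousOn
    refine Integrable.of_bound (hf.measurable.comp (hRm x)).aestronglyMeasurable D ?_
    filter_upwards with g
    exact hD _ (by simp)
  have hX0 : ∀ M, 0 ≤ X M := fun M => HcEx_nonneg _ fun x => by positivity
  have hY0 : ∀ M g, 0 ≤ Y M g := fun M g => HcEx_nonneg _ fun x => by positivity
  have hYX : ∀ M g, Y M g ≤ C ^ 2 * X M := by
    intro M g
    simp only [hX, hY]
    rw [← HcEx_smul]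
    apply HcEx_mono
    intro x
    have := hC (R g x)
    rw [LinearIsometryEquiv.norm_map] at this
    rw [← sq_abs]
    calc _ ≤ (C * ‖x‖ ^ d) ^ 2 := by gcongr
      _ = _ := by ring
  have h1 : ∀ M, Integrable (Y M) κ ∧ ∫ g, Y M g ∂κ = B * X M := by
    intro M
    have := HcEx_integral κ (HcL (n+1) M) (fun g x => (p (R g x)) ^ 2)
      (fun x => hint (fun y => p y ^ 2) (hpc.pow 2) x)
    refine ⟨this.1, this.2.trans ?_⟩
    simp only [hX]
    rw [← HcEx_smul]
    congr 1; funext x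
    rw [hR (fun y => p y ^ 2) (hpc.pow 2) x]
    simp only [hph, mul_pow]
    rw [integral_const_mul, ← pow_mul, mul_comm d 2, mul_comm]
  have hcq : Continuous (fun y => |p y| ^ q) := hpc.abs.rpow_const fun _ => Or.inr hq0.le
  have hrc : Continuous (fun t : ℝ => t ^ (q / 2)) := continuous_id.rpow_const fun _ => Or.inr (by positivity)
  have hYm : ∀ M, AEStronglyMeasurable (fun g => Y M g ^ (q / 2)) κ := fun M =>
    hrc.comp_aestronglyMeasurable (h1 M).1.1
  have hYi : ∀ M, Integrable (fun g => Y M g ^ (q / 2)) κ := by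
    intro M
    refine Integrable.of_bound (hYm M) ((C ^ 2 * X M) ^ (q / 2)) ?_
    filter_upwards with g
    rw [Real.norm_of_nonneg (Real.rpow_nonneg (hY0 M g) _)]
    exact Real.rpow_le_rpow (hY0 M g) (hYX M g) (by positivity)
  have h2 : ∀ M, A * X M ^ (q / 2) ≤ ((q - 1) ^ d) ^ (q / 2) * ∫ g, Y M g ^ (q / 2) ∂κ := by
    intro M
    have hI := HcEx_integral κ (HcL (n+1) M) (fun g x => |p (R g x)| ^ q)
      (fun x => hint (fun y => |p y| ^ q) hcq x)
    have e1 : ∫ g, HcEx (HcL (n+1) M) (fun x => |p (R g x)| ^ q) ∂κ =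
        A * HcEx (HcL (n+1) M) (fun x => (‖x‖ ^ (2 * d)) ^ (q / 2)) := by
      rw [hI.2, ← HcEx_smul]
      congr 1; funext x
      rw [hR (fun y => |p y| ^ q) hcq x]
      simp only [hph, abs_mul]
      have : ∀ ξ : Metric.sphere (0 : HcE n) 1, (|‖x‖ ^ d| * |p ξ.1|) ^ q =
          (‖x‖ ^ (2 * d)) ^ (q / 2) * |p ξ.1| ^ q := by
        intro ξ
        rw [Real.mul_rpow (abs_nonneg _) (abs_nonneg _)]
        congr 1
        rw [abs_of_nonneg (by positivity), mul_comm 2 d, pow_mul, ← Real.rpow_natCast (‖x‖ ^ d) 2,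
          ← Real.rpow_mul (by positivity)]
        congr 1; push_cast; ring
      simp only [this]
      rw [integral_const_mul, mul_comm]
    calc A * X M ^ (q / 2) ≤ A * HcEx (HcL (n+1) M) (fun x => (‖x‖ ^ (2 * d)) ^ (q / 2)) := by
          gcongr
          exact HcEx_jensen _ (by linarith) _ _ fun x => by positivity
      _ = ∫ g, HcEx (HcL (n+1) M) (fun x => |p (R g x)| ^ q) ∂κ := e1.symm
      _ ≤ ∫ g, ((q - 1) ^ d) ^ (q / 2) * Y M g ^ (q / 2) ∂κ := by
          refine integral_mono hI.1 ((hYi M).const_mul _) ?_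
          intro g
          have := HcEx_hyper q hq (HcL (n+1) M) d (fun x => p (R g x))
            (hdeg.comp (R g).toLinearEquiv.toLinearMap.toAddMonoidHom)
          have hnn : 0 ≤ HcEx (HcL (n+1) M) (fun x => |p (R g x)| ^ q) :=
            HcEx_nonneg _ fun x => by positivity
          have h3 := Real.rpow_le_rpow (Real.rpow_nonneg hnn _) this (by positivity : 0 ≤ q / 2)
          rw [← Real.rpow_mul hnn, show 2 / q * (q / 2) = 1 by field_simp, Real.rpow_one,
            Real.mul_rpow (by apply pow_nonneg; linarith) (hY0 M g)] at h3
          exact h3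
      _ = _ := integral_const_mul _ _
  obtain ⟨K, hK⟩ := hc.bddAbove_range
  have hXK : ∀ M, X M ≤ K := fun M => hK ⟨M, rfl⟩
  have t1 : Filter.Tendsto (fun M => ∫ g, Y M g ∂κ) Filter.atTop (nhds (∫ _ : G, ℓ ∂κ)) := by
    refine tendsto_integral_of_dominated_convergence (fun _ => C ^ 2 * K) (fun M => (h1 M).1.1)
      (integrable_const _) (fun M => ?_) ?_
    · filter_upwards with g
      rw [Real.norm_of_nonneg (hY0 M g)]
      exact (hYX M g).trans (by gcongr; exact hXK M)
    · filter_upwards with g using hlim (R g)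
  have t2 : Filter.Tendsto (fun M => ∫ g, Y M g ^ (q / 2) ∂κ) Filter.atTop
      (nhds (∫ _ : G, ℓ ^ (q / 2) ∂κ)) := by
    refine tendsto_integral_of_dominated_convergence (fun _ => (C ^ 2 * K) ^ (q / 2)) hYm
      (integrable_const _) (fun M => ?_) ?_
    · filter_upwards with g
      rw [Real.norm_of_nonneg (Real.rpow_nonneg (hY0 M g) _)]
      refine Real.rpow_le_rpow (hY0 M g) ((hYX M g).trans (by gcongr; exact hXK M)) (by positivity)
    · filter_upwards with g using (hrc.tendsto ℓ).comp (hlim (R g))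
  simp only [integral_const, probReal_univ, one_smul] at t1 t2
  have hl : ℓ = B * c := by
    refine tendsto_nhds_unique t1 ?_
    simp only [fun M => (h1 M).2]
    exact hc.const_mul B
  have hfin : A * c ^ (q / 2) ≤ ((q - 1) ^ d) ^ (q / 2) * ℓ ^ (q / 2) :=
    le_of_tendsto_of_tendsto' (((hrc.tendsto c).comp hc).const_mul A) (t2.const_mul _) h2
  have hq1 : 0 ≤ (q - 1) ^ d := by apply pow_nonneg; linarith
  have hcp : 0 < c ^ (q / 2) := Real.rpow_pos_of_pos (by linarith) _
  rw [hl, Real.mul_rpow hB0 (by linarith), ← mul_assoc, ← Real.mul_rpow hq1 hB0] at hfin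
  have h5 := le_of_mul_le_mul_right hfin hcp
  have h6 := Real.rpow_le_rpow hA0 h5 (by positivity : 0 ≤ 2 / q)
  rwa [← Real.rpow_mul (by positivity), show q / 2 * (2 / q) = 1 by field_simp, Real.rpow_one] at h6

lemma hc_decomp {N : ℕ} (f : ℕ → MvPolynomial (Fin N) ℝ) (hf : ∀ i, (f i).IsHomogeneous i) (d : ℕ) :
    ∃ g h : MvPolynomial (Fin N) ℝ, g.IsHomogeneous d ∧ h.IsHomogeneous (d - 1) ∧ (d = 0 → h = 0) ∧
      ∀ x : EuclideanSpace ℝ (Fin N), ‖x‖ = 1 →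
        MvPolynomial.eval (fun i => x i) (∑ i ∈ Finset.range (d + 1), f i) =
          MvPolynomial.eval (fun i => x i) g + MvPolynomial.eval (fun i => x i) h := by
  induction d with
  | zero => exact ⟨f 0, 0, hf 0, MvPolynomial.isHomogeneous_zero _ _ _, fun _ => rfl, by simp⟩
  | succ d ih =>
    obtain ⟨g, h, hg, hh, h0, he⟩ := ih
    refine ⟨f (d + 1) + h * ∑ i, MvPolynomial.X i ^ 2, g, ?_, by simpa using hg, by simp, ?_⟩
    · refine (hf _).add ?_
      rcases Nat.eq_zero_or_pos d with hd | hd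
      · rw [h0 hd, zero_mul]; exact MvPolynomial.isHomogeneous_zero _ _ _
      · have : d + 1 = (d - 1) + 2 := by omega
        rw [this]
        refine hh.mul (MvPolynomial.IsHomogeneous.sum _ _ _ fun i _ => ?_)
        simpa using (MvPolynomial.isHomogeneous_X ℝ i).pow 2
    · intro x hx
      have hS : ∑ i, (x i) ^ 2 = 1 := by
        have := EuclideanSpace.norm_sq_eq x
        rw [hx] at this
        simpa using this.symm
      rw [Finset.sum_range_succ, map_add, he x hx]
      simp only [map_add, map_mul, map_sum, map_pow, MvPolynomial.eval_X, hS]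
      ring

lemma hc_main_s4 {n d : ℕ}
    (μ : Measure (Metric.sphere (0 : HcE n) 1)) [IsProbabilityMeasure μ]
    (hinv : ∀ U : HcE n ≃ₗᵢ[ℝ] HcE n,
      ∀ f : HcE n → ℝ, Continuous f → ∫ ξ, f (U ξ.1) ∂μ = ∫ ξ, f ξ.1 ∂μ)
    (P : MvPolynomial (Fin (n+1)) ℝ) (hP : P.totalDegree = d) (q : ℝ) (hq : 2 ≤ q) :
    (∫ ξ, |MvPolynomial.eval (fun i => ξ.1 i) P| ^ q ∂μ) ^ (2 / q) ≤
      (q - 1) ^ d * ∫ ξ, (MvPolynomial.eval (fun i => ξ.1 i) P) ^ 2 ∂μ := by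
  obtain ⟨g, h, hg, hh, h0, he⟩ := hc_decomp (fun i => MvPolynomial.homogeneousComponent i P)
    (fun i => MvPolynomial.homogeneousComponent_isHomogeneous i P) d
  have hs := MvPolynomial.sum_homogeneousComponent P
  rw [hP] at hs
  rw [hs] at he
  have he' : ∀ ξ : Metric.sphere (0 : HcE n) 1, MvPolynomial.eval (fun i => ξ.1 i) P =
      MvPolynomial.eval (fun i => ξ.1 i) g + MvPolynomial.eval (fun i => ξ.1 i) h :=
    fun ξ => he ξ.1 (mem_sphere_zero_iff_norm.1 ξ.2)
  simp only [he']
  have Hg := hc_hom μ hinv g hg q hq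
  have Hh := hc_hom μ hinv h hh q hq
  have hneg : ∀ f : HcE n → ℝ, Continuous f → ∫ ξ : Metric.sphere (0 : HcE n) 1, f (-ξ.1) ∂μ =
      ∫ ξ : Metric.sphere (0 : HcE n) 1, f ξ.1 ∂μ := by
    intro f hf
    simpa using hinv (LinearIsometryEquiv.neg ℝ) f hf
  have hpar : ∀ x : HcE n, ∃ s : ℝ, |s| = 1 ∧
      MvPolynomial.eval (fun i => (-x) i) g = s * MvPolynomial.eval (fun i => x i) g ∧
      MvPolynomial.eval (fun i => (-x) i) h = - s * MvPolynomial.eval (fun i => x i) h := by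
    intro x
    have e1 := hc_hom_eval g hg (-1) (fun i => x i)
    have e2 := hc_hom_eval h hh (-1) (fun i => x i)
    simp only [neg_one_mul] at e1 e2
    refine ⟨(-1) ^ d, by simp, e1, ?_⟩
    rcases d with _ | d
    · simp [h0 rfl]
    · refine e2.trans ?_
      simp [pow_succ]
  have hgc := hc_cont_eval g
  have hhc := hc_cont_eval h
  have hh0 : d = 0 → ∀ x : HcE n, MvPolynomial.eval (fun i => x i) h = 0 := by
    intro hd x; simp [h0 hd]
  clear he he' hs h0
  generalize hG : (fun x : HcE n => MvPolynomial.eval (fun i => x i) g) = G at *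
  generalize hH : (fun x : HcE n => MvPolynomial.eval (fun i => x i) h) = H at *
  have hGx : ∀ x : HcE n, MvPolynomial.eval (fun i => x i) g = G x := fun x => by rw [← hG]
  have hHx : ∀ x : HcE n, MvPolynomial.eval (fun i => x i) h = H x := fun x => by rw [← hH]
  simp only [hGx, hHx] at *
  clear hG hH hGx hHx
  have hq0 : 0 < q := by linarith
  have hint : ∀ f : HcE n → ℝ, Continuous f → Integrable (fun ξ : Metric.sphere (0 : HcE n) 1 => f ξ.1) μ := by
    intro f hf
    exact (hf.comp continuous_subtype_val).integrable_of_hasCompactSupport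
      (HasCompactSupport.of_compactSpace _)
  have hrc : ∀ f : HcE n → ℝ, Continuous f → Continuous (fun x => |f x| ^ q) :=
    fun f hf => hf.abs.rpow_const fun _ => Or.inr hq0.le
  have c1 := hrc _ (hgc.add hhc)
  have c2 := hrc _ (hgc.sub hhc)
  simp only [Pi.add_apply, Pi.sub_apply] at c1 c2
  have eqq : ∫ ξ : Metric.sphere (0 : HcE n) 1, |G ξ.1 + H ξ.1| ^ q ∂μ =
      ∫ ξ : Metric.sphere (0 : HcE n) 1, (|G ξ.1 + H ξ.1| ^ q + |G ξ.1 - H ξ.1| ^ q) / 2 ∂μ := by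
    rw [integral_div, integral_add (hint _ c1) (hint _ c2), ← hneg _ c2]
    have : ∀ x : HcE n, |G (-x) - H (-x)| = |G x + H x| := by
      intro x
      obtain ⟨s, hs, e1, e2⟩ := hpar x
      rw [e1, e2, show s * G x - -s * H x = s * (G x + H x) by ring, abs_mul, hs, one_mul]
    simp only [this]
    ring
  have egh : ∫ ξ : Metric.sphere (0 : HcE n) 1, G ξ.1 * H ξ.1 ∂μ = 0 := by
    have := hneg (fun x => G x * H x) (hgc.mul hhc)
    have e : ∀ x : HcE n, G (-x) * H (-x) = - (G x * H x) := by
      intro x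
      obtain ⟨s, hs, e1, e2⟩ := hpar x
      have hs2 : s * s = 1 := by rw [← abs_mul_abs_self, hs, one_mul]
      rw [e1, e2]
      linear_combination (- G x * H x) * hs2
    simp only [e, integral_neg] at this
    linarith
  have e2 : ∫ ξ : Metric.sphere (0 : HcE n) 1, (G ξ.1 + H ξ.1) ^ 2 ∂μ =
      ∫ ξ : Metric.sphere (0 : HcE n) 1, G ξ.1 ^ 2 ∂μ + ∫ ξ : Metric.sphere (0 : HcE n) 1, H ξ.1 ^ 2 ∂μ := by
    have : ∀ ξ : Metric.sphere (0 : HcE n) 1, (G ξ.1 + H ξ.1) ^ 2 =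
        (G ξ.1 ^ 2 + H ξ.1 ^ 2) + 2 * (G ξ.1 * H ξ.1) := fun ξ => by ring
    simp only [this]
    have i1 := hint (fun x => G x ^ 2) (hgc.pow 2)
    have i2 := hint (fun x => H x ^ 2) (hhc.pow 2)
    have i3 := hint (fun x => G x * H x) (hgc.mul hhc)
    have i4 := hint (fun x => G x ^ 2 + H x ^ 2) ((hgc.pow 2).add (hhc.pow 2))
    rw [integral_add i4 (i3.const_mul 2), integral_add i1 i2, integral_const_mul, egh]
    ring
  have opt := hc_opt q hq (∫ ξ : Metric.sphere (0 : HcE n) 1, |G ξ.1| ^ q ∂μ)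
    (∫ ξ : Metric.sphere (0 : HcE n) 1, |H ξ.1| ^ q ∂μ)
    (∫ ξ : Metric.sphere (0 : HcE n) 1, |G ξ.1 + H ξ.1| ^ q ∂μ)
    (integral_nonneg fun _ => by positivity) (integral_nonneg fun _ => by positivity)
    (integral_nonneg fun _ => by positivity) (by
      intro α β hα hβ hαβ
      have j1 := hint _ (hrc G hgc)
      have j2 := hint _ (hrc H hhc)
      rw [eqq, ← integral_const_mul, ← integral_const_mul, ← integral_const_mul,
        ← integral_add (j1.const_mul _) ((j2.const_mul _).const_mul _)]
      refine integral_mono (((hint _ c1).add (hint _ c2)).div_const 2)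
        ((j1.const_mul _).add ((j2.const_mul _).const_mul _)) ?_
      intro ξ
      exact hc_split q hq α β hα hβ hαβ _ _)
  have hlast : (q - 1) * (∫ ξ : Metric.sphere (0 : HcE n) 1, |H ξ.1| ^ q ∂μ) ^ (2 / q) ≤
      (q - 1) ^ d * ∫ ξ : Metric.sphere (0 : HcE n) 1, H ξ.1 ^ 2 ∂μ := by
    rcases d with _ | d
    · have hz := hh0 rfl
      have h2q : 2 / q ≠ 0 := by positivity
      simp [hz, hq0.ne']
    · have := mul_le_mul_of_nonneg_left Hh (by linarith : 0 ≤ q - 1)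
      refine this.trans (le_of_eq ?_)
      simp only [Nat.add_sub_cancel]
      ring
  rw [e2, mul_add]
  exact opt.trans (add_le_add Hg hlast)

/-- Hypercontractive norm inequality for low-degree polynomials on the real `n`-sphere:
if `μ` is the uniform (rotation-invariant) probability measure on
`S^n = {x ∈ ℝ^{n+1} : ‖x‖ = 1}` and `f` is (the restriction of) a polynomial of degree
at most `d`, then for any `q ≥ 2`, `‖f‖_{L^q(S^n)} ≤ (q-1)^{d/2} ‖f‖_{L^2(S^n)}`. -/
theorem sphere_poly_hypercontractive {n d : ℕ}
    (μ : Measure (Metric.sphere (0 : EuclideanSpace ℝ (Fin (n + 1))) 1))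
    [IsProbabilityMeasure μ]
    (hinv : ∀ U : EuclideanSpace ℝ (Fin (n + 1)) ≃ₗᵢ[ℝ] EuclideanSpace ℝ (Fin (n + 1)),
      Measure.map (fun ξ : Metric.sphere (0 : EuclideanSpace ℝ (Fin (n + 1))) 1 =>
        (⟨U ξ.1, by
          rw [mem_sphere_zero_iff_norm, U.norm_map, ← mem_sphere_zero_iff_norm]
          exact ξ.2⟩ : Metric.sphere (0 : EuclideanSpace ℝ (Fin (n + 1))) 1)) μ = μ)
    (P : MvPolynomial (Fin (n + 1)) ℝ) (hdeg : P.totalDegree ≤ d)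
    (q : ℝ) (hq : 2 ≤ q) :
    (∫ ξ, |MvPolynomial.eval (fun i => ξ.1 i) P| ^ q ∂μ) ^ (1 / q)
      ≤ (q - 1) ^ ((d : ℝ) / 2) *
          (∫ ξ, (MvPolynomial.eval (fun i => ξ.1 i) P) ^ 2 ∂μ) ^ ((1 : ℝ) / 2) := by
  have hinv' : ∀ U : HcE n ≃ₗᵢ[ℝ] HcE n,
      ∀ f : HcE n → ℝ, Continuous f → ∫ ξ : Metric.sphere (0 : HcE n) 1, f (U ξ.1) ∂μ =
        ∫ ξ : Metric.sphere (0 : HcE n) 1, f ξ.1 ∂μ := by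
    intro U f hf
    conv_rhs => rw [← hinv U]
    rw [integral_map]
    · exact (Continuous.subtype_mk (U.continuous.comp continuous_subtype_val) _).aemeasurable
    · exact (hf.comp continuous_subtype_val).aestronglyMeasurable
  have key := hc_main_s4 μ hinv' P rfl q hq
  have hq0 : 0 < q := by linarith
  set A := ∫ ξ, |MvPolynomial.eval (fun i => ξ.1 i) P| ^ q ∂μ with hA
  set B := ∫ ξ, (MvPolynomial.eval (fun i => ξ.1 i) P) ^ 2 ∂μ with hB
  have hA0 : 0 ≤ A := integral_nonneg fun _ => by positivity
  have hB0 : 0 ≤ B := integral_nonneg fun _ => by positivity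
  have key2 : A ^ (2 / q) ≤ (q - 1) ^ d * B :=
    key.trans (mul_le_mul_of_nonneg_right (pow_le_pow_right₀ (by linarith) hdeg) hB0)
  have hq1 : 0 ≤ q - 1 := by linarith
  have h6 := Real.rpow_le_rpow (by positivity) key2 (by norm_num : (0:ℝ) ≤ 1 / 2)
  rw [← Real.rpow_mul hA0, Real.mul_rpow (by positivity) hB0, ← Real.rpow_natCast,
    ← Real.rpow_mul hq1, show 2 / q * (1 / 2) = 1 / q by field_simp,
    show (d : ℝ) * (1 / 2) = d / 2 by ring] at h6
  exact h6
end
end
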